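/- For every integer ℓ ≥ 2 and every real x > 0, as n → ∞ the expectation of the number of joint orbits satisfies E[K_{ℓ,n}] ~ ((x·K_ℓ)^{1/ℓ}/(ℓ−1)) · n^{(ℓ−1)/ℓ}, i.e. the ratio of the two sides tends to 1. -/

import Mathlib

open Filter Topology Real MeasureTheory Asymptotics

noncomputable section

/-- Number of joint orbits of the subgroup generated by a tuple of permutations. -/
def kappa {ℓ n : ℕ} (σ : Fin ℓ → Equiv.Perm (Fin n)) : ℕ :=
  Nat.card (MulAction.orbitRel.Quotient (Subgroup.closure (Set.range σ)) (Fin n))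

/-- `Acount ℓ n k` is the number of commuting `ℓ`-tuples of permutations of `{1,…,n}`
with exactly `k` joint orbits. -/
def Acount (ℓ n k : ℕ) : ℕ :=
  Nat.card {σ : Fin ℓ → Equiv.Perm (Fin n) //
    (∀ i j, σ i * σ j = σ j * σ i) ∧ kappa σ = k}

/-- `Hpoly ℓ n x = (1/n!) ∑_k A(ℓ,n,k) x^k`. -/
def Hpoly (ℓ n : ℕ) (x : ℝ) : ℝ :=
  (1 / (n.factorial : ℝ)) * ∑ k ∈ Finset.range (n + 1), (Acount ℓ n k : ℝ) * x ^ k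

/-- Expectation, under the Ewens-like measure `P_{ℓ,n,x}`, of `g(K_{ℓ,n})`. -/
def expectK (ℓ n : ℕ) (x : ℝ) (g : ℕ → ℝ) : ℝ :=
  (∑ k ∈ Finset.range (n + 1), g k * (Acount ℓ n k : ℝ) * x ^ k) /
    (∑ k ∈ Finset.range (n + 1), (Acount ℓ n k : ℝ) * x ^ k)

/-- Mean of `K_{ℓ,n}` under `P_{ℓ,n,x}`. -/
def meanK (ℓ n : ℕ) (x : ℝ) : ℝ := expectK ℓ n x (fun k => (k : ℝ))

/-- Variance of `K_{ℓ,n}` under `P_{ℓ,n,x}`. -/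
def varK (ℓ n : ℕ) (x : ℝ) : ℝ :=
  expectK ℓ n x (fun k => ((k : ℝ) - meanK ℓ n x) ^ 2)

/-- Real Riemann zeta values (as a series), `zetaR s = ∑_{m ≥ 1} m^{-s}`. -/
def zetaR (s : ℝ) : ℝ := ∑' m : ℕ, 1 / ((m : ℝ) + 1) ^ s

/-- The constant `K_ℓ = (ℓ-1)! ζ(2)⋯ζ(ℓ)`. -/
def Kconst (ℓ : ℕ) : ℝ := ((ℓ - 1).factorial : ℝ) * ∏ j ∈ Finset.Icc 2 ℓ, zetaR (j : ℝ)

/-- The multiple series `Z^{[ℓ]}_{α_1,…,α_ℓ}(t)` with complex exponents. -/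
def Zc (ℓ : ℕ) (α : Fin ℓ → ℂ) (t : ℝ) : ℂ :=
  ∑' δ : Fin ℓ → ℕ+,
    (∏ i, ((δ i : ℕ) : ℂ) ^ (α i - 1)) *
      Complex.exp (-(((∏ i, ((δ i : ℕ) : ℝ)) * t : ℝ) : ℂ))

/-- The multiple series `Z^{[ℓ]}_{α_1,…,α_ℓ}(t)` with real exponents. -/
def Zr (ℓ : ℕ) (α : Fin ℓ → ℝ) (t : ℝ) : ℝ :=
  ∑' δ : Fin ℓ → ℕ+,
    (∏ i, ((δ i : ℕ) : ℝ) ^ (α i - 1)) *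
      Real.exp (-(∏ i, ((δ i : ℕ) : ℝ)) * t)

/-- The staircase series `Z_m^{[ℓ]}(t) = Z^{[ℓ]}_{m,m-1,…,m-ℓ+1}(t)`. -/
def Zstair (ℓ : ℕ) (m : ℤ) (t : ℝ) : ℝ :=
  Zr ℓ (fun i => (m : ℝ) - (i : ℕ)) t

/-- The inverse function `(Z_ℓ^{[ℓ]})^{-1} : (0,∞) → (0,∞)`. -/
def ZstairInv (ℓ : ℕ) (u : ℝ) : ℝ :=
  Function.invFunOn (Zstair ℓ ℓ) (Set.Ioi 0) u

/-- The function `q_{ℓ,n}(y,u,θ)` from the saddle point analysis. -/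
def qfun (ℓ n : ℕ) (y u θ : ℝ) : ℂ :=
  Complex.I * (n : ℂ) * (θ : ℂ) - (y : ℂ) * ∑' δ : Fin ℓ → ℕ+,
    (∏ i, ((δ i : ℕ) : ℂ) ^ ((ℓ : ℤ) - 2 - (i : ℕ))) *
      Complex.exp (-(((∏ i, ((δ i : ℕ) : ℝ)) * u : ℝ) : ℂ)) *
      (Complex.exp (Complex.I * (((∏ i, ((δ i : ℕ) : ℝ)) * θ : ℝ) : ℂ)) - 1)

/-- The normalizing sequence `b_n = ((x K_ℓ)^{1/(2ℓ)}/√(ℓ(ℓ-1))) n^{(ℓ-1)/(2ℓ)}`. -/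
def bseq (ℓ : ℕ) (x : ℝ) (n : ℕ) : ℝ :=
  (x * Kconst ℓ) ^ ((1 : ℝ) / (2 * (ℓ : ℝ))) / Real.sqrt ((ℓ : ℝ) * ((ℓ : ℝ) - 1)) *
    (n : ℝ) ^ (((ℓ : ℝ) - 1) / (2 * (ℓ : ℝ)))

/-- The sequence `x_n = x e^{s/b_n}`. -/
def xseq (ℓ : ℕ) (x s : ℝ) (n : ℕ) : ℝ := x * Real.exp (s / bseq ℓ x n)

/-- The saddle point sequence `t_n = (Z_ℓ^{[ℓ]})^{-1}(n/x)`. -/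
def tseq (ℓ : ℕ) (x : ℝ) (n : ℕ) : ℝ := ZstairInv ℓ ((n : ℝ) / x)

end

/-!
`n! · Hpoly ℓ n x` is the sum of `x ^ #orbits` over the actions of `ℤ^ℓ` on `n` points. Marking a
point and splitting off its orbit, which is `ℤ^ℓ / L` for a sublattice `L`, gives the recursion
`n H_n = x ∑_{1 ≤ m ≤ n} s_ℓ(m) H_{n-m}`, where `s_ℓ(m)` is the number of sublattices of index `m`.
Hermite normal forms express `s_ℓ` as the Dirichlet convolution of `m^0, m^1, …, m^(ℓ-1)`, and hence
`t^ℓ ∑ s_ℓ(m) e^{-mt} → K_ℓ` as `t → 0⁺`. Comparing the recursion with sequences of the form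
`exp (c n^(1-1/ℓ))` yields `log H_n(x) ~ (x K_ℓ)^(1/ℓ) / (1 - 1/ℓ) · n^(1-1/ℓ)`.

Finally, `log H_n` is a convex function of `log x` whose derivative is the mean number of orbits.
Pointwise limits of convex functions can be differentiated wherever the limit is differentiable, so
the asymptotics of the mean are those of `log H_n`, differentiated in `log x`.
-/

section Convexity

lemma eventually_lt_of_subgradient {ι : Type*} {l : Filter ι} {f : ι → ℝ → ℝ} {φ : ℝ → ℝ}
    {M : ι → ℝ} {s₀ D d : ℝ} (hf : ∀ s, Tendsto (fun n ↦ f n s) l (𝓝 (φ s)))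
    (hφ : HasDerivAt φ D s₀) (hM : ∀ᶠ n in l, ∀ s, (s - s₀) * M n ≤ f n s - f n s₀)
    (hd : D < d) : ∀ᶠ n in l, M n < d := by
  have hslope : ∀ᶠ s in 𝓝[>] s₀, slope φ s₀ s < d :=
    ((hasDerivAt_iff_tendsto_slope.1 hφ).mono_left
      (nhdsWithin_mono _ fun _ hy ↦ ne_of_gt hy)).eventually_lt_const hd
  obtain ⟨s, hsd, hs : s₀ < s⟩ := (hslope.and self_mem_nhdsWithin).exists
  rw [slope_def_field] at hsd
  have hquot := ((hf s).sub (hf s₀)).div_const (s - s₀)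
  filter_upwards [hquot.eventually_lt_const hsd, hM] with n hlt hMn
  refine lt_of_le_of_lt ?_ hlt
  rw [le_div_iff₀ (sub_pos.2 hs), mul_comm]
  exact hMn s

lemma tendsto_of_subgradient {ι : Type*} {l : Filter ι} {f : ι → ℝ → ℝ} {φ : ℝ → ℝ}
    {M : ι → ℝ} {s₀ D : ℝ} (hf : ∀ s, Tendsto (fun n ↦ f n s) l (𝓝 (φ s)))
    (hφ : HasDerivAt φ D s₀) (hM : ∀ᶠ n in l, ∀ s, (s - s₀) * M n ≤ f n s - f n s₀) :
    Tendsto M l (𝓝 D) := by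
  refine tendsto_order.2 ⟨fun d hd ↦ ?_, fun d hd ↦ eventually_lt_of_subgradient hf hφ hM hd⟩
  have hφ_neg : HasDerivAt (fun s ↦ φ (-s)) (-D) (-s₀) := by
    rw [← neg_neg s₀] at hφ
    simpa [Function.comp_def] using hφ.comp (-s₀) (hasDerivAt_neg (-s₀))
  have hM_neg : ∀ᶠ n in l, ∀ s, (s - -s₀) * -M n ≤ f n (-s) - f n (- -s₀) := by
    filter_upwards [hM] with n hn s
    calc (s - -s₀) * -M n = (-s - s₀) * M n := by ring
      _ ≤ f n (-s) - f n (- -s₀) := by rw [neg_neg]; exact hn (-s)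
  filter_upwards [eventually_lt_of_subgradient (f := fun n s ↦ f n (-s)) (fun s ↦ hf (-s))
    hφ_neg hM_neg (neg_lt_neg hd)] with n hn using neg_lt_neg_iff.1 hn

lemma sum_mul_div_sum_le_log_sub_log {ι : Type*} {s : Finset ι} {w v : ι → ℝ}
    (hw : ∀ i ∈ s, 0 ≤ w i) (hs : 0 < ∑ i ∈ s, w i) :
    (∑ i ∈ s, w i * v i) / ∑ i ∈ s, w i ≤
      log (∑ i ∈ s, w i * exp (v i)) - log (∑ i ∈ s, w i) := by
  have jensen := convexOn_exp.map_centerMass_le hw hs (fun i _ ↦ Set.mem_univ (v i))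
  simp only [Finset.centerMass, smul_eq_mul, inv_mul_eq_div, Function.comp_apply] at jensen
  have hpos : 0 < (∑ i ∈ s, w i * exp (v i)) / ∑ i ∈ s, w i := (exp_pos _).trans_le jensen
  rw [← log_div ((div_pos_iff_of_pos_right hs).1 hpos).ne' hs.ne']
  exact (le_log_iff_exp_le hpos).2 jensen

end Convexity

section LaplaceGrowth

/-- The Laplace transform `∑ b m e^{-mt}` of the measure `∑ b m δ_m`; equivalently the power series
with coefficients `b` at `e^{-t}`. -/
noncomputable def laplaceSeries (b : ℕ → ℝ) (t : ℝ) : ℝ := ∑' m : ℕ, b m * exp (-(m * t))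

/-- The nonnegative sequence `b`, with `b 0 = 0`, has a Laplace transform on `(0, ∞)` which is
asymptotic to `K t^{-ρ}` as `t → 0`. Dropping the constant term makes the transform decay
exponentially at infinity. -/
structure HasLaplaceGrowth (b : ℕ → ℝ) (ρ K : ℝ) : Prop where
  nonneg : ∀ m, 0 ≤ b m
  map_zero : b 0 = 0
  summable : ∀ {t : ℝ}, 0 < t → Summable fun m : ℕ ↦ b m * exp (-(m * t))
  tendsto : Tendsto (fun t ↦ t ^ ρ * laplaceSeries b t) (𝓝[>] 0) (𝓝 K)

namespace HasLaplaceGrowth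

variable {b : ℕ → ℝ} {ρ K : ℝ}

lemma term_nonneg (hb : HasLaplaceGrowth b ρ K) (m : ℕ) (t : ℝ) : 0 ≤ b m * exp (-(m * t)) :=
  mul_nonneg (hb.nonneg m) (exp_pos _).le

lemma laplaceSeries_nonneg (hb : HasLaplaceGrowth b ρ K) (t : ℝ) : 0 ≤ laplaceSeries b t :=
  tsum_nonneg fun m ↦ hb.term_nonneg m t

lemma const_mul (hb : HasLaplaceGrowth b ρ K) {x : ℝ} (hx : 0 ≤ x) :
    HasLaplaceGrowth (fun m ↦ x * b m) ρ (x * K) where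
  nonneg m := mul_nonneg hx (hb.nonneg m)
  map_zero := by rw [hb.map_zero, mul_zero]
  summable ht := by simpa only [mul_assoc] using (hb.summable ht).mul_left x
  tendsto := by
    simpa only [laplaceSeries, mul_assoc, tsum_mul_left, mul_left_comm] using
      hb.tendsto.const_mul x

lemma laplaceSeries_add_le (hb : HasLaplaceGrowth b ρ K) {s t : ℝ} (hs : 0 ≤ s) (ht : 0 < t) :
    laplaceSeries b (s + t) ≤ exp (-s) * laplaceSeries b t := by
  rw [laplaceSeries, laplaceSeries, ← tsum_mul_left]
  refine (hb.summable (by positivity)).tsum_le_tsum (fun m ↦ ?_) ((hb.summable ht).mul_left _)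
  rcases m.eq_zero_or_pos with rfl | hm
  · simp [hb.map_zero]
  · have hm' : (1 : ℝ) ≤ m := by exact_mod_cast hm
    calc b m * exp (-(m * (s + t))) ≤ b m * exp (-s + -(m * t)) := by
          gcongr
          · exact hb.nonneg m
          · nlinarith
      _ = exp (-s) * (b m * exp (-(m * t))) := by rw [exp_add]; ring

lemma exists_rpow_mul_laplaceSeries_le (hb : HasLaplaceGrowth b ρ K) (hρ : 0 < ρ) :
    ∃ C, ∀ t, 0 < t → t ^ ρ * laplaceSeries b t ≤ C := by
  obtain ⟨δ, hδ : 0 < δ, hnear⟩ := mem_nhdsGT_iff_exists_Ioc_subset.1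
    (hb.tendsto.eventually_lt_const (lt_add_one K))
  refine ⟨max (K + 1) (ρ ^ ρ * exp δ * laplaceSeries b δ), fun t ht ↦ ?_⟩
  rcases le_total t δ with htδ | hδt
  · exact (hnear ⟨ht, htδ⟩).le.trans (le_max_left _ _)
  have hrpow : t ^ ρ ≤ ρ ^ ρ * exp t := by
    calc t ^ ρ = ρ ^ ρ * (t / ρ) ^ ρ := by
          rw [← mul_rpow hρ.le (by positivity), mul_div_cancel₀ _ hρ.ne']
      _ ≤ ρ ^ ρ * exp (t / ρ) ^ ρ := by
          gcongr
          linarith [add_one_le_exp (t / ρ)]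
      _ = ρ ^ ρ * exp t := by rw [← exp_mul, div_mul_cancel₀ _ hρ.ne']
  have hdecay := hb.laplaceSeries_add_le (sub_nonneg.2 hδt) hδ
  rw [sub_add_cancel] at hdecay
  calc t ^ ρ * laplaceSeries b t
      ≤ ρ ^ ρ * exp t * (exp (-(t - δ)) * laplaceSeries b δ) :=
        mul_le_mul hrpow hdecay (hb.laplaceSeries_nonneg t) (by positivity)
    _ = ρ ^ ρ * exp δ * laplaceSeries b δ := by
        rw [show δ = t + -(t - δ) by ring, exp_add]
        ring_nf
    _ ≤ _ := le_max_right _ _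

lemma tendsto_laplaceSeries_div_natCast (hb : HasLaplaceGrowth b ρ K) (hρ : 0 < ρ) {a : ℝ}
    (ha : 0 < a) :
    Tendsto (fun n : ℕ ↦ laplaceSeries b (a * (n : ℝ) ^ (-ρ⁻¹)) / n) atTop (𝓝 (K / a ^ ρ)) := by
  have hscale : Tendsto (fun n : ℕ ↦ a * (n : ℝ) ^ (-ρ⁻¹)) atTop (𝓝[>] 0) := by
    refine tendsto_nhdsWithin_iff.2 ⟨?_, ?_⟩
    · simpa using ((tendsto_rpow_neg_atTop (inv_pos.2 hρ)).comp
        tendsto_natCast_atTop_atTop).const_mul a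
    · filter_upwards [eventually_gt_atTop 0] with n hn
      have : (0 : ℝ) < n := by exact_mod_cast hn
      exact Set.mem_Ioi.2 (by positivity)
  refine ((hb.tendsto.comp hscale).div_const (a ^ ρ)).congr' ?_
  filter_upwards [eventually_gt_atTop 0] with n hn
  have hn' : (0 : ℝ) < n := by exact_mod_cast hn
  have hpow : (a * (n : ℝ) ^ (-ρ⁻¹)) ^ ρ = a ^ ρ / n := by
    rw [mul_rpow ha.le (by positivity), ← rpow_mul hn'.le, neg_mul, inv_mul_cancel₀ hρ.ne',
      rpow_neg_one, div_eq_mul_inv]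
  simp only [Function.comp_apply, hpow]
  field_simp

lemma laplaceSeries_le_sum_add (hb : HasLaplaceGrowth b ρ K) {t y : ℝ} (ht : 0 < t) :
    laplaceSeries b t ≤ ∑ m ∈ Finset.Icc 1 ⌊y⌋₊, b m * exp (-(m * t)) +
      exp (-(y * (t / 2))) * laplaceSeries b (t / 2) := by
  have htail := (hb.summable (half_pos ht)).mul_left (exp (-(y * (t / 2))))
  have hhead : HasSum (Set.indicator (Finset.Icc 1 ⌊y⌋₊) fun m : ℕ ↦ b m * exp (-(m * t))) _ :=
    hasSum_sum_of_ne_finset_zero (s := Finset.Icc 1 ⌊y⌋₊) fun m hm ↦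
      Set.indicator_of_notMem (mt Finset.mem_coe.1 hm) _
  rw [Finset.sum_indicator_subset _ subset_rfl] at hhead
  rw [laplaceSeries, laplaceSeries, ← tsum_mul_left]
  refine hasSum_le (fun m ↦ ?_) (hb.summable ht).hasSum (hhead.add htail.hasSum)
  by_cases hm : m ∈ (Finset.Icc 1 ⌊y⌋₊ : Set ℕ)
  · rw [Set.indicator_of_mem hm]
    exact le_add_of_nonneg_right (mul_nonneg (exp_pos _).le (hb.term_nonneg m _))
  rw [Set.indicator_of_notMem hm, zero_add]
  rcases m.eq_zero_or_pos with rfl | hm0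
  · simp [hb.map_zero]
  have hym : y < m := by
    by_contra! hle
    exact hm (Finset.mem_coe.2 (Finset.mem_Icc.2 ⟨hm0, Nat.le_floor hle⟩))
  calc b m * exp (-(m * t)) ≤ b m * exp (-(y * (t / 2)) + -(m * (t / 2))) := by
        gcongr
        · exact hb.nonneg m
        · nlinarith
    _ = exp (-(y * (t / 2))) * (b m * exp (-(m * (t / 2)))) := by rw [exp_add]; ring

end HasLaplaceGrowth

end LaplaceGrowth

section Recurrence

lemma exists_le_mul_of_subsolution_of_supersolution {b f g : ℕ → ℝ} (hb : ∀ m, 0 ≤ b m)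
    (hg : ∀ n, 0 < g n)
    (hsub : ∀ᶠ n : ℕ in atTop, n * f n ≤ ∑ m ∈ Finset.Icc 1 n, b m * f (n - m))
    (hsuper : ∀ᶠ n : ℕ in atTop, ∑ m ∈ Finset.Icc 1 n, b m * g (n - m) ≤ n * g n) :
    ∃ A > 0, ∀ n, f n ≤ A * g n := by
  obtain ⟨N, hN⟩ := eventually_atTop.1 ((hsub.and hsuper).and (eventually_gt_atTop 0))
  have hratio (k : ℕ) : 0 ≤ |f k| / g k := div_nonneg (abs_nonneg _) (hg k).le
  have hA : 0 < 1 + ∑ k ∈ Finset.range N, |f k| / g k :=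
    add_pos_of_pos_of_nonneg one_pos (Finset.sum_nonneg fun k _ ↦ hratio k)
  refine ⟨_, hA, fun n ↦ ?_⟩
  set A := 1 + ∑ k ∈ Finset.range N, |f k| / g k
  induction n using Nat.strong_induction_on with
  | _ n ih =>
  rcases lt_or_ge n N with hn | hn
  · have hle : |f n| / g n ≤ A :=
      (Finset.single_le_sum (fun k _ ↦ hratio k) (Finset.mem_range.2 hn)).trans
        (le_add_of_nonneg_left zero_le_one)
    exact (le_abs_self _).trans ((div_le_iff₀ (hg n)).1 hle)
  · obtain ⟨⟨hfn, hgn⟩, hn0⟩ := hN n hn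
    refine le_of_mul_le_mul_left ?_ (Nat.cast_pos (α := ℝ).2 hn0)
    calc n * f n ≤ ∑ m ∈ Finset.Icc 1 n, b m * f (n - m) := hfn
      _ ≤ ∑ m ∈ Finset.Icc 1 n, b m * (A * g (n - m)) := by
          gcongr with m hm
          · exact hb m
          · exact ih _ (by grind)
      _ = A * ∑ m ∈ Finset.Icc 1 n, b m * g (n - m) := by
          rw [Finset.mul_sum]
          exact Finset.sum_congr rfl fun m _ ↦ mul_left_comm _ _ _
      _ ≤ n * (A * g n) := by
          rw [mul_left_comm]
          exact mul_le_mul_of_nonneg_left hgn hA.le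

lemma add_rpow_le_rpow_add {z u α : ℝ} (hz : 0 < z) (hzu : 0 ≤ z + u) (h0 : 0 ≤ α) (h1 : α ≤ 1) :
    (z + u) ^ α ≤ z ^ α + α * u * z ^ (α - 1) := by
  have hu : -1 ≤ u / z := by rw [le_div_iff₀ hz]; linarith
  calc (z + u) ^ α = z ^ α * (1 + u / z) ^ α := by
        rw [← mul_rpow hz.le (by linarith), mul_add, mul_one, mul_div_cancel₀ _ hz.ne']
    _ ≤ z ^ α * (1 + α * (u / z)) := by
        gcongr
        exact rpow_one_add_le_one_add_mul_self hu h0 h1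
    _ = z ^ α + α * u * z ^ (α - 1) := by rw [rpow_sub_one hz.ne']; ring

lemma rpow_sub_le_sub_rpow {y u α η : ℝ} (hy : 0 < y) (hu : 0 ≤ u) (hη : 0 < η)
    (huy : u ≤ η / (1 + η) * y) (h0 : 0 ≤ α) (h1 : α ≤ 1) :
    y ^ α - (1 + η) * α * u * y ^ (α - 1) ≤ (y - u) ^ α := by
  have hbase : y / (1 + η) ≤ y - u := by
    have : y / (1 + η) + η / (1 + η) * y = y := by field_simp
    linarith
  have hbase_pos : 0 < y / (1 + η) := by positivity
  have htangent := add_rpow_le_rpow_add (u := u) (hbase_pos.trans_le hbase) (by linarith) h0 h1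
  rw [sub_add_cancel] at htangent
  have hslope : (y - u) ^ (α - 1) ≤ (1 + η) * y ^ (α - 1) := by
    calc (y - u) ^ (α - 1) ≤ (y / (1 + η)) ^ (α - 1) :=
          rpow_le_rpow_of_nonpos hbase_pos hbase (by linarith)
      _ = (1 + η) ^ (1 - α) * y ^ (α - 1) := by
          rw [div_rpow hy.le (by positivity), ← neg_sub 1 α, rpow_neg (by positivity : 0 ≤ 1 + η)]
          field_simp
      _ ≤ (1 + η) ^ (1 : ℝ) * y ^ (α - 1) := by
          gcongr
          · linarith
          · linarith
      _ = (1 + η) * y ^ (α - 1) := by rw [rpow_one]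
  nlinarith [mul_le_mul_of_nonneg_left hslope (mul_nonneg h0 hu)]

lemma exp_mul_sub_rpow_le {c y u β : ℝ} (hc : 0 ≤ c) (hy : 0 < y) (huy : u ≤ y) (h0 : 0 ≤ β)
    (h1 : β ≤ 1) :
    exp (c * (y - u) ^ (1 - β)) ≤
      exp (c * y ^ (1 - β)) * exp (-(u * (c * (1 - β) * y ^ (-β)))) := by
  have htangent := add_rpow_le_rpow_add (u := -u) hy (by linarith) (sub_nonneg.2 h1)
    (sub_le_self 1 h0)
  rw [← sub_eq_add_neg, show 1 - β - 1 = -β by ring] at htangent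
  rw [← exp_add, exp_le_exp]
  calc c * (y - u) ^ (1 - β) ≤ c * (y ^ (1 - β) + (1 - β) * -u * y ^ (-β)) := by gcongr
    _ = c * y ^ (1 - β) + -(u * (c * (1 - β) * y ^ (-β))) := by ring

lemma le_exp_mul_sub_rpow {c y u β η : ℝ} (hc : 0 ≤ c) (hy : 0 < y) (hu : 0 ≤ u) (hη : 0 < η)
    (huy : u ≤ η / (1 + η) * y) (h0 : 0 ≤ β) (h1 : β ≤ 1) :
    exp (c * y ^ (1 - β)) * exp (-(u * (c * (1 - β) * (1 + η) * y ^ (-β)))) ≤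
      exp (c * (y - u) ^ (1 - β)) := by
  have hchord := rpow_sub_le_sub_rpow hy hu hη huy (sub_nonneg.2 h1) (sub_le_self 1 h0)
  rw [show 1 - β - 1 = -β by ring] at hchord
  rw [← exp_add, exp_le_exp]
  calc c * y ^ (1 - β) + -(u * (c * (1 - β) * (1 + η) * y ^ (-β)))
      = c * (y ^ (1 - β) - (1 + η) * (1 - β) * u * y ^ (-β)) := by ring
    _ ≤ c * (y - u) ^ (1 - β) := by gcongr

namespace HasLaplaceGrowth

variable {b : ℕ → ℝ} {ρ K c : ℝ}

lemma eventually_exp_supersolution (hb : HasLaplaceGrowth b ρ K) (hρ : 1 < ρ)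
    (hc : 0 < c) (hcK : K < (c * (1 - ρ⁻¹)) ^ ρ) :
    ∀ᶠ n : ℕ in atTop, ∑ m ∈ Finset.Icc 1 n, b m * exp (c * ((n - m : ℕ) : ℝ) ^ (1 - ρ⁻¹)) ≤
      n * exp (c * (n : ℝ) ^ (1 - ρ⁻¹)) := by
  have hα : 0 < 1 - ρ⁻¹ := sub_pos.2 (inv_lt_one_of_one_lt₀ hρ)
  have hlim := hb.tendsto_laplaceSeries_div_natCast (by positivity) (mul_pos hc hα)
  filter_upwards [hlim.eventually_lt_const ((div_lt_one (by positivity)).2 hcK),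
    eventually_gt_atTop 0] with n hlt hn
  have hn' : (0 : ℝ) < n := by exact_mod_cast hn
  set t := c * (1 - ρ⁻¹) * (n : ℝ) ^ (-ρ⁻¹)
  calc ∑ m ∈ Finset.Icc 1 n, b m * exp (c * ((n - m : ℕ) : ℝ) ^ (1 - ρ⁻¹))
      ≤ ∑ m ∈ Finset.Icc 1 n, b m * (exp (c * (n : ℝ) ^ (1 - ρ⁻¹)) * exp (-(m * t))) := by
        refine Finset.sum_le_sum fun m hm ↦ mul_le_mul_of_nonneg_left ?_ (hb.nonneg m)
        have hmn := (Finset.mem_Icc.1 hm).2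
        rw [Nat.cast_sub hmn]
        exact exp_mul_sub_rpow_le hc.le hn' (by exact_mod_cast hmn) (by positivity)
          (sub_pos.1 hα).le
    _ = exp (c * (n : ℝ) ^ (1 - ρ⁻¹)) * ∑ m ∈ Finset.Icc 1 n, b m * exp (-(m * t)) := by
        rw [Finset.mul_sum]
        exact Finset.sum_congr rfl fun m _ ↦ mul_left_comm _ _ _
    _ ≤ exp (c * (n : ℝ) ^ (1 - ρ⁻¹)) * laplaceSeries b t := by
        gcongr
        exact (hb.summable (by positivity)).sum_le_tsum _ fun m _ ↦ hb.term_nonneg m t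
    _ ≤ n * exp (c * (n : ℝ) ^ (1 - ρ⁻¹)) := by
        rw [mul_comm]
        gcongr
        exact ((div_lt_one hn').1 hlt).le

lemma eventually_natCast_lt_sum (hb : HasLaplaceGrowth b ρ K) (hρ : 1 < ρ)
    {a δ : ℝ} (ha : 0 < a) (hδ : 0 < δ) (haK : a ^ ρ < K) :
    ∀ᶠ n : ℕ in atTop,
      n < ∑ m ∈ Finset.Icc 1 ⌊δ * n⌋₊, b m * exp (-(m * (a * (n : ℝ) ^ (-ρ⁻¹)))) := by
  have hρ0 : 0 < ρ := one_pos.trans hρ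
  have htail : Tendsto (fun n : ℕ ↦ exp (-(δ * n * (a * (n : ℝ) ^ (-ρ⁻¹) / 2)))) atTop (𝓝 0) := by
    have htop : Tendsto (fun n : ℕ ↦ δ * a / 2 * (n : ℝ) ^ (1 - ρ⁻¹)) atTop atTop :=
      ((tendsto_rpow_atTop (sub_pos.2 (inv_lt_one_of_one_lt₀ hρ))).comp
        tendsto_natCast_atTop_atTop).const_mul_atTop (by positivity)
    refine (tendsto_exp_neg_atTop_nhds_zero.comp htop).congr' ?_
    filter_upwards [eventually_gt_atTop 0] with n hn
    have hn' : (0 : ℝ) < n := by exact_mod_cast hn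
    rw [Function.comp_apply, sub_eq_add_neg, rpow_add hn', rpow_one]
    ring_nf
  have hlim := (hb.tendsto_laplaceSeries_div_natCast hρ0 ha).sub
    (htail.mul (hb.tendsto_laplaceSeries_div_natCast hρ0 (half_pos ha)))
  rw [zero_mul, sub_zero] at hlim
  filter_upwards [hlim.eventually_const_lt ((one_lt_div (by positivity)).2 haK),
    eventually_gt_atTop 0] with n hlt hn
  have hn' : (0 : ℝ) < n := by exact_mod_cast hn
  have htrunc := hb.laplaceSeries_le_sum_add (y := δ * n)
    (by positivity : 0 < a * (n : ℝ) ^ (-ρ⁻¹))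
  rw [div_mul_eq_mul_div a, ← mul_div_assoc, ← sub_div, one_lt_div hn'] at hlt
  linarith

lemma eventually_exp_subsolution (hb : HasLaplaceGrowth b ρ K) (hρ : 1 < ρ)
    (hc : 0 < c) (hcK : (c * (1 - ρ⁻¹)) ^ ρ < K) :
    ∀ᶠ n : ℕ in atTop, n * exp (c * (n : ℝ) ^ (1 - ρ⁻¹)) ≤
      ∑ m ∈ Finset.Icc 1 n, b m * exp (c * ((n - m : ℕ) : ℝ) ^ (1 - ρ⁻¹)) := by
  have hα : 0 < 1 - ρ⁻¹ := sub_pos.2 (inv_lt_one_of_one_lt₀ hρ)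
  obtain ⟨η, hη, hηK⟩ : ∃ η > 0, (c * (1 - ρ⁻¹) * (1 + η)) ^ ρ < K := by
    have hcont : ContinuousAt (fun η : ℝ ↦ (c * (1 - ρ⁻¹) * (1 + η)) ^ ρ) 0 :=
      ContinuousAt.rpow_const (by fun_prop) (Or.inr (by positivity))
    have hnear := hcont.eventually_lt_const (by simpa using hcK)
    exact ((eventually_mem_nhdsWithin (s := Set.Ioi 0)).and
      (hnear.filter_mono nhdsWithin_le_nhds)).exists
  set δ := η / (1 + η)
  have hδ1 : δ ≤ 1 := (div_le_one (by positivity)).2 (by linarith)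
  filter_upwards [hb.eventually_natCast_lt_sum hρ (by positivity) (by positivity : 0 < δ) hηK,
    eventually_gt_atTop 0] with n hlt hn
  have hn' : (0 : ℝ) < n := by exact_mod_cast hn
  set t := c * (1 - ρ⁻¹) * (1 + η) * (n : ℝ) ^ (-ρ⁻¹)
  have hsubset : Finset.Icc 1 ⌊δ * n⌋₊ ⊆ Finset.Icc 1 n :=
    Finset.Icc_subset_Icc_right (Nat.floor_le_of_le (mul_le_of_le_one_left hn'.le hδ1))
  calc n * exp (c * (n : ℝ) ^ (1 - ρ⁻¹))
      ≤ (∑ m ∈ Finset.Icc 1 ⌊δ * n⌋₊, b m * exp (-(m * t))) * exp (c * (n : ℝ) ^ (1 - ρ⁻¹)) := by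
        gcongr
    _ = ∑ m ∈ Finset.Icc 1 ⌊δ * n⌋₊, b m * (exp (c * (n : ℝ) ^ (1 - ρ⁻¹)) * exp (-(m * t))) := by
        rw [Finset.sum_mul]
        exact Finset.sum_congr rfl fun m _ ↦ by ring
    _ ≤ ∑ m ∈ Finset.Icc 1 ⌊δ * n⌋₊, b m * exp (c * ((n - m : ℕ) : ℝ) ^ (1 - ρ⁻¹)) := by
        refine Finset.sum_le_sum fun m hm ↦ mul_le_mul_of_nonneg_left ?_ (hb.nonneg m)
        rw [Nat.cast_sub (Finset.mem_Icc.1 (hsubset hm)).2]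
        exact le_exp_mul_sub_rpow hc.le hn' m.cast_nonneg hη
          ((Nat.le_floor_iff (by positivity)).1 (Finset.mem_Icc.1 hm).2) (by positivity)
          (sub_pos.1 hα).le
    _ ≤ ∑ m ∈ Finset.Icc 1 n, b m * exp (c * ((n - m : ℕ) : ℝ) ^ (1 - ρ⁻¹)) :=
        Finset.sum_le_sum_of_subset_of_nonneg hsubset
          fun m _ _ ↦ mul_nonneg (hb.nonneg m) (exp_pos _).le

variable {h : ℕ → ℝ}

lemma eventually_lt_log_div (hb : HasLaplaceGrowth b ρ K) (hρ : 1 < ρ) (hK : 0 < K)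
    (hpos : ∀ n, 0 < h n)
    (hrec : ∀ n : ℕ, n * h n = ∑ m ∈ Finset.Icc 1 n, b m * h (n - m)) {d : ℝ}
    (hd : d < K ^ ρ⁻¹ / (1 - ρ⁻¹)) :
    ∀ᶠ n : ℕ in atTop, d < log (h n) / (n : ℝ) ^ (1 - ρ⁻¹) := by
  have hα : 0 < 1 - ρ⁻¹ := sub_pos.2 (inv_lt_one_of_one_lt₀ hρ)
  obtain ⟨c, hdc, hcK⟩ := exists_between (max_lt hd (div_pos (rpow_pos_of_pos hK _) hα))
  have hc : 0 < c := (le_max_right _ _).trans_lt hdc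
  rw [lt_div_iff₀ hα, lt_rpow_inv_iff_of_pos (by positivity) hK.le (by positivity)] at hcK
  obtain ⟨A, hA, hle⟩ := exists_le_mul_of_subsolution_of_supersolution hb.nonneg hpos
    (hb.eventually_exp_subsolution hρ hc hcK) (.of_forall fun n ↦ (hrec n).ge)
  have hgrowth : Tendsto (fun n : ℕ ↦ (n : ℝ) ^ (1 - ρ⁻¹)) atTop atTop :=
    (tendsto_rpow_atTop hα).comp tendsto_natCast_atTop_atTop
  filter_upwards [(hgrowth.const_div_atTop (log A)).eventually_lt_const
    (sub_pos.2 ((le_max_left _ _).trans_lt hdc)), hgrowth.eventually_gt_atTop 0] with n hlt hn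
  have hlog := log_le_log (exp_pos _) (hle n)
  rw [log_exp, log_mul hA.ne' (hpos n).ne'] at hlog
  rw [lt_div_iff₀ hn]
  rw [div_lt_iff₀ hn] at hlt
  linarith

lemma eventually_log_div_lt (hb : HasLaplaceGrowth b ρ K) (hρ : 1 < ρ) (hK : 0 < K)
    (hpos : ∀ n, 0 < h n)
    (hrec : ∀ n : ℕ, n * h n = ∑ m ∈ Finset.Icc 1 n, b m * h (n - m)) {d : ℝ}
    (hd : K ^ ρ⁻¹ / (1 - ρ⁻¹) < d) :
    ∀ᶠ n : ℕ in atTop, log (h n) / (n : ℝ) ^ (1 - ρ⁻¹) < d := by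
  have hα : 0 < 1 - ρ⁻¹ := sub_pos.2 (inv_lt_one_of_one_lt₀ hρ)
  obtain ⟨c, hcK, hcd⟩ := exists_between hd
  have hc : 0 < c := (div_pos (rpow_pos_of_pos hK _) hα).trans hcK
  rw [div_lt_iff₀ hα, rpow_inv_lt_iff_of_pos hK.le (by positivity) (by positivity)] at hcK
  obtain ⟨A, hA, hle⟩ := exists_le_mul_of_subsolution_of_supersolution hb.nonneg
    (fun n : ℕ ↦ exp_pos (c * (n : ℝ) ^ (1 - ρ⁻¹))) (.of_forall fun n ↦ (hrec n).le)
    (hb.eventually_exp_supersolution hρ hc hcK)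
  have hgrowth : Tendsto (fun n : ℕ ↦ (n : ℝ) ^ (1 - ρ⁻¹)) atTop atTop :=
    (tendsto_rpow_atTop hα).comp tendsto_natCast_atTop_atTop
  filter_upwards [(hgrowth.const_div_atTop (log A)).eventually_lt_const (sub_pos.2 hcd),
    hgrowth.eventually_gt_atTop 0] with n hlt hn
  have hlog := log_le_log (hpos n) (hle n)
  rw [log_mul hA.ne' (exp_pos _).ne', log_exp] at hlog
  rw [div_lt_iff₀ hn] at hlt ⊢
  linarith

theorem tendsto_log_div_rpow (hb : HasLaplaceGrowth b ρ K) (hρ : 1 < ρ) (hK : 0 < K)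
    (hpos : ∀ n, 0 < h n)
    (hrec : ∀ n : ℕ, n * h n = ∑ m ∈ Finset.Icc 1 n, b m * h (n - m)) :
    Tendsto (fun n : ℕ ↦ log (h n) / (n : ℝ) ^ (1 - ρ⁻¹)) atTop (𝓝 (K ^ ρ⁻¹ / (1 - ρ⁻¹))) :=
  tendsto_order.2 ⟨fun _ hd ↦ hb.eventually_lt_log_div hρ hK hpos hrec hd,
    fun _ hd ↦ hb.eventually_log_div_lt hρ hK hpos hrec hd⟩

end HasLaplaceGrowth

end Recurrence

section DirichletConvolution

lemma hasSum_sum_divisorsAntidiagonal {f : ℕ × ℕ → ℝ} {s : ℝ} (hf : HasSum f s)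
    (h0 : ∀ p : ℕ × ℕ, p.1 * p.2 = 0 → f p = 0) :
    HasSum (fun m : ℕ ↦ ∑ p ∈ m.divisorsAntidiagonal, f p) s := by
  refine ((Equiv.sigmaFiberEquiv fun p : ℕ × ℕ ↦ p.1 * p.2).hasSum_iff.2 hf).sigma fun m ↦ ?_
  rcases eq_or_ne m 0 with rfl | hm
  · rw [Nat.divisorsAntidiagonal_zero, Finset.sum_empty]
    convert hasSum_zero with p
    exact h0 _ p.2
  · let e : {p : ℕ × ℕ // p.1 * p.2 = m} ≃ (m.divisorsAntidiagonal : Set (ℕ × ℕ)) :=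
      Equiv.subtypeEquivRight fun p ↦ by simp [hm]
    exact e.hasSum_iff.2 (Finset.hasSum m.divisorsAntidiagonal f)

variable {a b : ArithmeticFunction ℝ} {ρ K D : ℝ}

lemma rpow_mul_mul_laplaceSeries {t : ℝ} (ht : 0 < t) (e : ℕ) :
    t ^ ρ * (a e * laplaceSeries b (e * t)) =
      a e / (e : ℝ) ^ ρ * ((e * t) ^ ρ * laplaceSeries b (e * t)) := by
  rcases e.eq_zero_or_pos with rfl | he
  · simp
  · have : (0 : ℝ) < e := by exact_mod_cast he
    rw [mul_rpow this.le ht.le]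
    field_simp

namespace HasLaplaceGrowth

lemma summable_mul_laplaceSeries (hb : HasLaplaceGrowth b ρ K) (hρ : 0 < ρ) (ha : ∀ e, 0 ≤ a e)
    (hD : Summable fun e : ℕ ↦ a e / (e : ℝ) ^ ρ) {t : ℝ} (ht : 0 < t) :
    Summable fun e : ℕ ↦ a e * laplaceSeries b (e * t) := by
  obtain ⟨C, hC⟩ := hb.exists_rpow_mul_laplaceSeries_le hρ
  rw [← summable_mul_left_iff (rpow_pos_of_pos ht ρ).ne']
  refine Summable.of_nonneg_of_le (fun e ↦ ?_) (fun e ↦ ?_) (hD.mul_right C)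
  · exact mul_nonneg (by positivity) (mul_nonneg (ha e) (hb.laplaceSeries_nonneg _))
  · rw [rpow_mul_mul_laplaceSeries ht]
    rcases e.eq_zero_or_pos with rfl | he
    · simp
    · have : 0 < e * t := by positivity
      exact mul_le_mul_of_nonneg_left (hC _ this) (div_nonneg (ha e) (by positivity))

lemma hasSum_dirichlet_mul_exp (hb : HasLaplaceGrowth b ρ K) (hρ : 0 < ρ) (ha : ∀ e, 0 ≤ a e)
    (hD : Summable fun e : ℕ ↦ a e / (e : ℝ) ^ ρ) {t : ℝ} (ht : 0 < t) :
    HasSum (fun m : ℕ ↦ (a * b) m * exp (-(m * t))) (∑' e : ℕ, a e * laplaceSeries b (e * t)) := by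
  have hrow (e : ℕ) : HasSum (fun d : ℕ ↦ a e * (b d * exp (-(d * (e * t)))))
      (a e * laplaceSeries b (e * t)) := by
    rcases e.eq_zero_or_pos with rfl | he
    · simp
    · exact (hb.summable (by positivity : 0 < e * t)).hasSum.mul_left _
  have hsummable : Summable fun p : ℕ × ℕ ↦ a p.1 * (b p.2 * exp (-(p.2 * (p.1 * t)))) := by
    rw [summable_prod_of_nonneg fun p ↦ mul_nonneg (ha _) (hb.term_nonneg _ _)]
    exact ⟨fun e ↦ (hrow e).summable, by
      simpa only [(hrow _).tsum_eq] using hb.summable_mul_laplaceSeries hρ ha hD ht⟩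
  have hsum := hsummable.hasSum
  rw [hsummable.tsum_prod' fun e ↦ (hrow e).summable] at hsum
  simp only [(hrow _).tsum_eq] at hsum
  refine (hasSum_sum_divisorsAntidiagonal hsum fun p hp ↦ ?_).congr_fun fun m ↦ ?_
  · rcases Nat.mul_eq_zero.1 hp with hp | hp <;> simp [hp]
  · rw [ArithmeticFunction.mul_apply, Finset.sum_mul]
    refine Finset.sum_congr rfl fun p hp ↦ ?_
    rw [← (Nat.mem_divisorsAntidiagonal.1 hp).1, Nat.cast_mul, mul_assoc]
    ring_nf

lemma tendsto_tsum_mul_laplaceSeries (hb : HasLaplaceGrowth b ρ K) (hρ : 0 < ρ)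
    (ha : ∀ e, 0 ≤ a e) (hD : HasSum (fun e : ℕ ↦ a e / (e : ℝ) ^ ρ) D) :
    Tendsto (fun t ↦ ∑' e : ℕ, t ^ ρ * (a e * laplaceSeries b (e * t))) (𝓝[>] 0)
      (𝓝 (D * K)) := by
  obtain ⟨C, hC⟩ := hb.exists_rpow_mul_laplaceSeries_le hρ
  rw [← (hD.mul_right K).tsum_eq]
  refine tendsto_tsum_of_dominated_convergence (hD.summable.mul_right C) (fun e ↦ ?_) ?_
  · rcases e.eq_zero_or_pos with rfl | he
    · simp
    have he' : (0 : ℝ) < e := by exact_mod_cast he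
    have hscale : Tendsto (fun t : ℝ ↦ e * t) (𝓝[>] 0) (𝓝[>] 0) :=
      tendsto_nhdsWithin_iff.2 ⟨by
        simpa using ((continuous_const_mul (e : ℝ)).tendsto 0).mono_left nhdsWithin_le_nhds,
        by filter_upwards [self_mem_nhdsWithin] with t ht using mul_pos he' ht⟩
    refine ((hb.tendsto.comp hscale).const_mul (a e / (e : ℝ) ^ ρ)).congr' ?_
    filter_upwards [self_mem_nhdsWithin] with t ht using (rpow_mul_mul_laplaceSeries ht e).symm
  · filter_upwards [self_mem_nhdsWithin] with t (ht : 0 < t) e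
    have hcoeff : 0 ≤ a e / (e : ℝ) ^ ρ := div_nonneg (ha e) (by positivity)
    rw [rpow_mul_mul_laplaceSeries ht, norm_of_nonneg (mul_nonneg hcoeff
      (mul_nonneg (by positivity) (hb.laplaceSeries_nonneg _)))]
    rcases e.eq_zero_or_pos with rfl | he
    · simp
    · exact mul_le_mul_of_nonneg_left (hC _ (by positivity)) hcoeff

theorem dirichlet_mul (hb : HasLaplaceGrowth b ρ K) (hρ : 0 < ρ) (ha : ∀ e, 0 ≤ a e)
    (hD : HasSum (fun e : ℕ ↦ a e / (e : ℝ) ^ ρ) D) :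
    HasLaplaceGrowth (a * b : ArithmeticFunction ℝ) ρ (D * K) where
  nonneg m := by
    rw [ArithmeticFunction.mul_apply]
    exact Finset.sum_nonneg fun p _ ↦ mul_nonneg (ha _) (hb.nonneg _)
  map_zero := ArithmeticFunction.map_zero
  summable ht := (hb.hasSum_dirichlet_mul_exp hρ ha hD.summable ht).summable
  tendsto := by
    refine (hb.tendsto_tsum_mul_laplaceSeries hρ ha hD).congr' ?_
    filter_upwards [self_mem_nhdsWithin] with t ht
    rw [tsum_mul_left, ← (hb.hasSum_dirichlet_mul_exp hρ ha hD.summable ht).tsum_eq, laplaceSeries]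

end HasLaplaceGrowth

end DirichletConvolution

section PowerFunctions

lemma succ_pow_le_factorial_mul_choose (d k : ℕ) :
    ((d : ℝ) + 1) ^ k ≤ k.factorial * (d + k).choose k := by
  rw [← Nat.cast_mul, ← Nat.ascFactorial_eq_factorial_mul_choose]
  exact_mod_cast Nat.pow_succ_le_ascFactorial (d + 1) k

lemma summable_succ_pow_mul_geometric (k : ℕ) {q : ℝ} (hq0 : 0 ≤ q) (hq1 : q < 1) :
    Summable fun d : ℕ ↦ ((d : ℝ) + 1) ^ k * q ^ d := by
  have hgeom := (hasSum_choose_mul_geometric_of_norm_lt_one k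
    ((norm_of_nonneg hq0).trans_lt hq1)).summable.mul_left (k.factorial : ℝ)
  refine Summable.of_nonneg_of_le (fun d ↦ by positivity) (fun d ↦ ?_) hgeom
  rw [← mul_assoc]
  gcongr
  exact succ_pow_le_factorial_mul_choose d k

lemma tsum_succ_pow_mul_geometric_le (k : ℕ) {q : ℝ} (hq0 : 0 ≤ q) (hq1 : q < 1) :
    ∑' d : ℕ, ((d : ℝ) + 1) ^ k * q ^ d ≤ k.factorial / (1 - q) ^ (k + 1) := by
  have hgeom := (hasSum_choose_mul_geometric_of_norm_lt_one k
    ((norm_of_nonneg hq0).trans_lt hq1)).mul_left (k.factorial : ℝ)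
  rw [mul_one_div] at hgeom
  refine hasSum_le (fun d ↦ ?_) (summable_succ_pow_mul_geometric k hq0 hq1).hasSum hgeom
  rw [← mul_assoc]
  gcongr
  exact succ_pow_le_factorial_mul_choose d k

lemma le_tsum_succ_pow_mul_geometric (k : ℕ) {q : ℝ} (hq0 : 0 ≤ q) (hq1 : q < 1) :
    k.factorial * q ^ k / (1 - q) ^ (k + 1) ≤ ∑' d : ℕ, ((d : ℝ) + 1) ^ k * q ^ d := by
  have hgeom := (hasSum_choose_mul_geometric_of_norm_lt_one k
    ((norm_of_nonneg hq0).trans_lt hq1)).mul_left (k.factorial * q ^ k)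
  rw [mul_one_div] at hgeom
  have hsum := summable_succ_pow_mul_geometric k hq0 hq1
  calc k.factorial * q ^ k / (1 - q) ^ (k + 1)
      ≤ ∑' d : ℕ, (((d + k : ℕ) : ℝ) + 1) ^ k * q ^ (d + k) := by
        refine hasSum_le (fun d ↦ ?_) hgeom ((summable_nat_add_iff k).2 hsum).hasSum
        have hle : k.factorial * (d + k).choose k ≤ (d + k + 1) ^ k := by
          rw [← Nat.descFactorial_eq_factorial_mul_choose]
          exact (Nat.descFactorial_le_pow _ _).trans (Nat.pow_le_pow_left (Nat.le_succ _) _)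
        calc _ = ((k.factorial * (d + k).choose k : ℕ) : ℝ) * q ^ (d + k) := by
              push_cast; ring
          _ ≤ _ := by gcongr; exact_mod_cast hle
    _ ≤ ∑' d : ℕ, ((d : ℝ) + 1) ^ k * q ^ d := by
        rw [← hsum.sum_add_tsum_nat_add k]
        exact le_add_of_nonneg_left (Finset.sum_nonneg fun d _ ↦ by positivity)

lemma tendsto_div_one_sub_exp_neg : Tendsto (fun s : ℝ ↦ s / (1 - exp (-s))) (𝓝[>] 0) (𝓝 1) := by
  have hderiv : HasDerivAt (fun s : ℝ ↦ 1 - exp (-s)) 1 0 := by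
    simpa using ((hasDerivAt_neg (0 : ℝ)).exp).const_sub 1
  have hslope := ((hasDerivAt_iff_tendsto_slope.1 hderiv).mono_left
    (nhdsWithin_mono _ fun y (hy : 0 < y) ↦ hy.ne')).inv₀ one_ne_zero
  rw [inv_one] at hslope
  exact hslope.congr fun s ↦ by simp [slope_def_field]

open ArithmeticFunction in
lemma hasSum_pow_mul_exp (k : ℕ) {s : ℝ} (hs : 0 < s) :
    HasSum (fun m : ℕ ↦ (pow k : ArithmeticFunction ℝ) m * exp (-(m * s)))
      (exp (-s) * ∑' d : ℕ, ((d : ℝ) + 1) ^ k * exp (-s) ^ d) := by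
  rw [← hasSum_nat_add_iff' 1]
  simp only [Finset.range_one, Finset.sum_singleton, ArithmeticFunction.map_zero, zero_mul,
    sub_zero]
  refine ((summable_succ_pow_mul_geometric k (exp_pos _).le
    (exp_lt_one_iff.2 (neg_lt_zero.2 hs))).hasSum.mul_left _).congr_fun fun d ↦ ?_
  rw [natCoe_apply, pow_apply, if_neg (by simp), neg_mul_eq_mul_neg, exp_nat_mul, pow_succ']
  push_cast
  ring

open ArithmeticFunction in
theorem hasLaplaceGrowth_pow (k : ℕ) :
    HasLaplaceGrowth (pow k : ArithmeticFunction ℝ) (k + 1) k.factorial where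
  nonneg m := by rw [natCoe_apply]; exact Nat.cast_nonneg _
  map_zero := ArithmeticFunction.map_zero
  summable ht := (hasSum_pow_mul_exp k ht).summable
  tendsto := by
    have hexp : Tendsto (fun s : ℝ ↦ exp (-s)) (𝓝[>] 0) (𝓝 1) := by
      simpa using ((by fun_prop : Continuous fun s : ℝ ↦ exp (-s)).tendsto 0).mono_left
        nhdsWithin_le_nhds
    have hratio := tendsto_div_one_sub_exp_neg.pow (k + 1)
    have hlower := (hratio.mul (hexp.pow (k + 1))).const_mul (k.factorial : ℝ)
    have hupper := (hratio.mul hexp).const_mul (k.factorial : ℝ)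
    simp only [one_pow, mul_one] at hlower hupper
    refine tendsto_of_tendsto_of_tendsto_of_le_of_le' hlower hupper ?_ ?_
    all_goals
      filter_upwards [self_mem_nhdsWithin] with s (hs : 0 < s)
      have hq : exp (-s) < 1 := exp_lt_one_iff.2 (neg_lt_zero.2 hs)
      rw [laplaceSeries, (hasSum_pow_mul_exp k hs).tsum_eq, div_pow, ← Nat.cast_succ,
        rpow_natCast]
    · calc _ = s ^ (k + 1) * (exp (-s) *
              (k.factorial * exp (-s) ^ k / (1 - exp (-s)) ^ (k + 1))) := by ring
        _ ≤ _ := by gcongr; exact le_tsum_succ_pow_mul_geometric k (exp_pos _).le hq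
    · calc _ ≤ s ^ (k + 1) * (exp (-s) * (k.factorial / (1 - exp (-s)) ^ (k + 1))) := by
            gcongr; exact tsum_succ_pow_mul_geometric_le k (exp_pos _).le hq
        _ = _ := by ring

end PowerFunctions

section ZetaValues

lemma summable_zetaR {s : ℝ} (hs : 1 < s) : Summable fun m : ℕ ↦ 1 / ((m : ℝ) + 1) ^ s :=
  ((summable_one_div_nat_add_rpow 1 s).2 hs).congr fun m ↦ by
    rw [abs_of_nonneg (by positivity)]

lemma zetaR_pos {s : ℝ} (hs : 1 < s) : 0 < zetaR s :=
  (summable_zetaR hs).tsum_pos (fun m ↦ by positivity) 0 (by simp)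

open ArithmeticFunction in
lemma hasSum_pow_div_rpow {i : ℕ} {s : ℝ} (hs : i + 1 < s) :
    HasSum (fun n : ℕ ↦ (pow i : ArithmeticFunction ℝ) n / (n : ℝ) ^ s) (zetaR (s - i)) := by
  rw [← hasSum_nat_add_iff' 1]
  simp only [Finset.range_one, Finset.sum_singleton, ArithmeticFunction.map_zero, zero_div,
    sub_zero]
  refine (summable_zetaR (by linarith : 1 < s - i)).hasSum.congr_fun fun n ↦ ?_
  rw [natCoe_apply, pow_apply, if_neg (by simp), rpow_sub (by positivity), rpow_natCast,
    one_div_div]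
  push_cast
  rfl

lemma Kconst_pos (ℓ : ℕ) : 0 < Kconst ℓ :=
  mul_pos (by positivity) (Finset.prod_pos fun _ hj ↦
    zetaR_pos (by exact_mod_cast (Finset.mem_Icc.1 hj).1))

lemma Kconst_succ (k : ℕ) :
    Kconst (k + 1) = (∏ i ∈ Finset.range k, zetaR ((k : ℝ) + 1 - i)) * k.factorial := by
  rw [Kconst, Nat.add_sub_cancel, mul_comm]
  congr 1
  refine Finset.prod_nbij' (k + 1 - ·) (k + 1 - ·) ?_ ?_ ?_ ?_ fun j hj ↦ ?_
  any_goals intro j hj; simp only [Finset.mem_Icc, Finset.mem_range] at hj ⊢; omega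
  rw [Nat.cast_sub (Finset.mem_Icc.1 hj).2]
  push_cast
  ring_nf

end ZetaValues

section SublatticeCount

/-- The number of subgroups of index `m` in `ℤ ^ ℓ`, as the Dirichlet convolution of
`m ↦ m ^ i` for `i < ℓ`; `nat_card_subgroup_index_eq` justifies the name. -/
noncomputable def sublatticeCount (ℓ : ℕ) : ArithmeticFunction ℕ :=
  ∏ i ∈ Finset.range ℓ, ArithmeticFunction.pow i

lemma natCoe_sublatticeCount (ℓ : ℕ) :
    (sublatticeCount ℓ : ArithmeticFunction ℝ) =
      ∏ i ∈ Finset.range ℓ, (ArithmeticFunction.pow i : ArithmeticFunction ℝ) := by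
  induction ℓ with
  | zero => simp [sublatticeCount]
  | succ ℓ ih =>
    rw [Finset.prod_range_succ, ← ih, sublatticeCount, Finset.prod_range_succ,
      ArithmeticFunction.natCoe_mul]
    rfl

lemma hasLaplaceGrowth_prod_pow_mul_pow {j k : ℕ} (hjk : j ≤ k) :
    HasLaplaceGrowth ((∏ i ∈ Finset.range j, (ArithmeticFunction.pow i : ArithmeticFunction ℝ)) *
        (ArithmeticFunction.pow k : ArithmeticFunction ℝ) : ArithmeticFunction ℝ) (k + 1)
      ((∏ i ∈ Finset.range j, zetaR ((k : ℝ) + 1 - i)) * k.factorial) := by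
  induction j with
  | zero => simpa using hasLaplaceGrowth_pow k
  | succ j ih =>
    have hj : (j : ℝ) + 1 < k + 1 := by exact_mod_cast Nat.succ_lt_succ hjk
    rw [Finset.prod_range_succ_comm, Finset.prod_range_succ_comm, mul_assoc, mul_assoc]
    exact (ih (by omega)).dirichlet_mul (by positivity)
      (fun e ↦ by rw [ArithmeticFunction.natCoe_apply]; exact Nat.cast_nonneg _)
      (hasSum_pow_div_rpow hj)

theorem hasLaplaceGrowth_sublatticeCount {ℓ : ℕ} (hℓ : ℓ ≠ 0) :
    HasLaplaceGrowth (fun m ↦ (sublatticeCount ℓ m : ℝ)) ℓ (Kconst ℓ) := by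
  obtain ⟨k, rfl⟩ := Nat.exists_eq_succ_of_ne_zero hℓ
  have hgrowth := hasLaplaceGrowth_prod_pow_mul_pow (le_refl k)
  rw [← Finset.prod_range_succ, ← natCoe_sublatticeCount, ← Kconst_succ] at hgrowth
  exact_mod_cast hgrowth

lemma id_pmul_mul (f g : ArithmeticFunction ℕ) :
    ArithmeticFunction.id.pmul (f * g) =
      ArithmeticFunction.id.pmul f * ArithmeticFunction.id.pmul g := by
  ext n
  simp only [ArithmeticFunction.pmul_apply, ArithmeticFunction.mul_apply, Finset.mul_sum,
    ArithmeticFunction.id_apply]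
  refine Finset.sum_congr rfl fun p hp ↦ ?_
  rw [← (Nat.mem_divisorsAntidiagonal.1 hp).1]
  ring

lemma id_pmul_pow (k : ℕ) :
    ArithmeticFunction.id.pmul (ArithmeticFunction.pow k) = ArithmeticFunction.pow (k + 1) := by
  ext n
  rcases eq_or_ne n 0 with rfl | hn
  · simp
  · simp [ArithmeticFunction.pow_apply, hn, pow_succ']

lemma id_pmul_one : ArithmeticFunction.id.pmul (1 : ArithmeticFunction ℕ) = 1 := by
  ext n
  rcases eq_or_ne n 1 with rfl | hn
  · simp
  · simp [hn]

lemma id_pmul_sublatticeCount (ℓ : ℕ) :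
    ArithmeticFunction.id.pmul (sublatticeCount ℓ) =
      ∏ i ∈ Finset.range ℓ, ArithmeticFunction.pow (i + 1) := by
  induction ℓ with
  | zero => simp [sublatticeCount, id_pmul_one]
  | succ ℓ ih =>
    rw [sublatticeCount, Finset.prod_range_succ, ← sublatticeCount, id_pmul_mul, ih, id_pmul_pow,
      Finset.prod_range_succ]

lemma sublatticeCount_zero : sublatticeCount 0 = 1 := Finset.prod_range_zero _

theorem sublatticeCount_succ (ℓ m : ℕ) :
    sublatticeCount (ℓ + 1) m = ∑ p ∈ m.divisorsAntidiagonal, p.2 * sublatticeCount ℓ p.2 := by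
  have hrec : sublatticeCount (ℓ + 1) =
      ArithmeticFunction.zeta * ArithmeticFunction.id.pmul (sublatticeCount ℓ) := by
    rw [id_pmul_sublatticeCount, sublatticeCount, Finset.prod_range_succ', mul_comm,
      ArithmeticFunction.pow_zero_eq_zeta]
  rw [hrec, ArithmeticFunction.mul_apply]
  refine Finset.sum_congr rfl fun p hp ↦ ?_
  rw [ArithmeticFunction.zeta_apply_ne (Nat.ne_zero_of_mem_divisorsAntidiagonal hp).1, one_mul,
    ArithmeticFunction.pmul_apply, ArithmeticFunction.id_apply]

end SublatticeCount

section SubgroupsOfGivenIndex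

@[to_additive]
lemma nat_card_subgroup_index_congr {G G' : Type*} [Group G] [Group G'] (e : G ≃* G') (m : ℕ) :
    Nat.card {H : Subgroup G // H.index = m} = Nat.card {H : Subgroup G' // H.index = m} :=
  Nat.card_congr <| e.mapSubgroup.toEquiv.subtypeEquiv fun H ↦ by
    rw [← Subgroup.index_map_equiv H e]; rfl

/-- The subgroups of index `m` of an additive group are those of its multiplicative copy. -/
def addSubgroupIndexEquiv (A : Type*) [AddGroup A] (m : ℕ) :
    {B : AddSubgroup A // B.index = m} ≃ {H : Subgroup (Multiplicative A) // H.index = m} :=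
  AddSubgroup.toSubgroup.toEquiv.subtypeEquiv fun B ↦ by
    rw [← AddSubgroup.index_toSubgroup]; rfl

variable {G : Type*} [Group G] [Group.FG G]

instance finite_monoidHom_of_fg {M : Type*} [Monoid M] [Finite M] : Finite (G →* M) := by
  obtain ⟨S, hS, hSfin⟩ := Group.fg_iff.1 ‹Group.FG G›
  have := hSfin.to_subtype
  refine Finite.of_injective (fun (f : G →* M) (s : S) ↦ f s) fun f g hfg ↦ ?_
  exact MonoidHom.eq_of_eqOn_dense hS fun s hs ↦ congrFun hfg ⟨s, hs⟩

lemma finite_subgroup_index_eq {m : ℕ} (hm : m ≠ 0) : Finite {H : Subgroup G // H.index = m} := by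
  let pointStabilizer (p : (G →* Equiv.Perm (Fin m)) × Fin m) : Subgroup G :=
    (MulAction.stabilizer (Equiv.Perm (Fin m)) p.2).comap p.1
  refine ((Set.finite_range pointStabilizer).subset fun H (hH : H.index = m) ↦ ?_).to_subtype
  subst hH
  let e : G ⧸ H ≃ Fin H.index := Nat.equivFinOfCardPos hm
  refine ⟨(e.permCongrHom.toMonoidHom.comp (MulAction.toPermHom G (G ⧸ H)), e (1 : G)), ?_⟩
  ext g
  simp [pointStabilizer, Equiv.permCongrHom, eq_comm (a := (g : G ⧸ H)), QuotientGroup.eq]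

lemma finite_addSubgroup_index_eq {A : Type*} [AddGroup A] [AddGroup.FG A] {m : ℕ} (hm : m ≠ 0) :
    Finite {B : AddSubgroup A // B.index = m} := by
  have := finite_subgroup_index_eq (G := Multiplicative A) hm
  exact Finite.of_equiv _ (addSubgroupIndexEquiv A m).symm

end SubgroupsOfGivenIndex

section SubgroupsOfIntProd

variable {A : Type*} [AddCommGroup A]

lemma index_eq_index_map_fst_mul_index_comap_inr {A' : Type*} [AddCommGroup A']
    (L : AddSubgroup (A' × A)) :
    L.index =
      (L.map (AddMonoidHom.fst A' A)).index * (L.comap (AddMonoidHom.inr A' A)).index := by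
  have hker : (AddMonoidHom.fst A' A).ker = (AddMonoidHom.inr A' A).range := by
    ext ⟨a', a⟩
    simp [AddSubgroup.mem_prod, eq_comm]
  have hrange : (AddMonoidHom.fst A' A).range = ⊤ :=
    AddMonoidHom.range_eq_top_of_surjective _ Prod.fst_surjective
  rw [AddSubgroup.index_map, hrange, AddSubgroup.index_top, mul_one, AddSubgroup.index_comap,
    ← hker, ← AddSubgroup.relIndex_sup_left, mul_comm, AddSubgroup.relIndex_mul_index le_sup_left]

lemma eq_zmultiples_index (D : AddSubgroup ℤ) : D = AddSubgroup.zmultiples (D.index : ℤ) := by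
  obtain ⟨a, rfl⟩ := Int.subgroup_cyclic D
  rw [← AddSubgroup.zmultiples_eq_closure, Int.index_zmultiples, Int.zmultiples_natAbs]

/-- The subgroup of `ℤ × A` that projects onto `dℤ` and meets `A` in `B` (for `d ≠ 0`), the coset
of `B` lying over `d` being `c`. Every subgroup of finite index has this form: this is the Hermite
normal form, one coordinate at a time. -/
def hermiteSubgroup (d : ℕ) (B : AddSubgroup A) (c : A ⧸ B) : AddSubgroup (ℤ × A) :=
  (AddSubgroup.zmultiples ((d : ℤ), c)).comap
    ((AddMonoidHom.id ℤ).prodMap (QuotientAddGroup.mk' B))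

variable {d : ℕ} {B : AddSubgroup A} {c : A ⧸ B}

lemma mem_hermiteSubgroup {z : ℤ} {a : A} :
    (z, a) ∈ hermiteSubgroup d B c ↔ ∃ k : ℤ, k * d = z ∧ k • c = (a : A ⧸ B) := by
  simp [hermiteSubgroup, AddSubgroup.mem_zmultiples_iff]

lemma map_fst_hermiteSubgroup :
    (hermiteSubgroup d B c).map (AddMonoidHom.fst ℤ A) = AddSubgroup.zmultiples (d : ℤ) := by
  ext z
  simp only [AddSubgroup.mem_map, Prod.exists, mem_hermiteSubgroup, AddMonoidHom.coe_fst,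
    AddSubgroup.mem_zmultiples_iff, smul_eq_mul]
  constructor
  · rintro ⟨_, _, ⟨k, rfl, _⟩, rfl⟩
    exact ⟨k, rfl⟩
  · rintro ⟨k, rfl⟩
    obtain ⟨a, ha⟩ := QuotientAddGroup.mk_surjective (k • c)
    exact ⟨_, a, ⟨k, rfl, ha.symm⟩, rfl⟩

lemma comap_inr_hermiteSubgroup (hd : d ≠ 0) :
    (hermiteSubgroup d B c).comap (AddMonoidHom.inr ℤ A) = B := by
  ext a
  simp [mem_hermiteSubgroup, hd, eq_comm (a := (0 : A ⧸ B))]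

lemma index_hermiteSubgroup (hd : d ≠ 0) : (hermiteSubgroup d B c).index = d * B.index := by
  rw [index_eq_index_map_fst_mul_index_comap_inr, map_fst_hermiteSubgroup,
    comap_inr_hermiteSubgroup hd, Int.index_zmultiples, Int.natAbs_natCast]

lemma hermiteSubgroup_injective (hd : d ≠ 0) (B : AddSubgroup A) :
    Function.Injective (hermiteSubgroup d B) := by
  intro c c' h
  obtain ⟨a, rfl⟩ := QuotientAddGroup.mk_surjective c
  have hmem : ((d : ℤ), a) ∈ hermiteSubgroup d B a := mem_hermiteSubgroup.2 ⟨1, by simp⟩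
  obtain ⟨k, hk, hka⟩ := mem_hermiteSubgroup.1 (h ▸ hmem)
  rw [← hka, (mul_eq_right₀ (by exact_mod_cast hd)).1 hk, one_smul]

lemma exists_hermiteSubgroup_eq (L : AddSubgroup (ℤ × A)) :
    ∃ c, hermiteSubgroup (L.map (AddMonoidHom.fst ℤ A)).index
      (L.comap (AddMonoidHom.inr ℤ A)) c = L := by
  set D := L.map (AddMonoidHom.fst ℤ A)
  have hD : D = AddSubgroup.zmultiples (D.index : ℤ) := eq_zmultiples_index D
  obtain ⟨⟨_, a⟩, haL, rfl : _ = (D.index : ℤ)⟩ : (D.index : ℤ) ∈ D :=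
    hD.ge (AddSubgroup.mem_zmultiples _)
  have hmem (k : ℤ) (a' : A) : k • (a : A ⧸ L.comap (AddMonoidHom.inr ℤ A)) = a' ↔
      (k * D.index, a') ∈ L := by
    have hsplit : (k * (D.index : ℤ), a') =
        k • ((D.index : ℤ), a) + AddMonoidHom.inr ℤ A (-(k • a) + a') := by
      ext <;> simp
    rw [← QuotientAddGroup.mk_zsmul, QuotientAddGroup.eq, AddSubgroup.mem_comap, hsplit,
      L.add_mem_cancel_left (L.zsmul_mem haL k)]
  refine ⟨a, ?_⟩
  ext ⟨z, a'⟩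
  simp only [mem_hermiteSubgroup, hmem]
  constructor
  · rintro ⟨k, rfl, hk⟩
    exact hk
  · intro hz
    have hzD : z ∈ D := ⟨(z, a'), hz, rfl⟩
    obtain ⟨k, rfl⟩ := AddSubgroup.mem_zmultiples_iff.1 (hD.le hzD)
    exact ⟨k, rfl, hz⟩

/-- The subgroup of `ℤ × A` of index `m = d * e` with parameters `d`, a subgroup `B` of `A` of
index `e`, and a coset of `B`. -/
def hermiteSubgroupOfIndex (A : Type*) [AddCommGroup A] (m : ℕ) :
    (Σ p : m.divisorsAntidiagonal, Σ B : {B : AddSubgroup A // B.index = p.1.2}, A ⧸ B.1) →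
      {L : AddSubgroup (ℤ × A) // L.index = m} :=
  fun ⟨p, B, c⟩ ↦ ⟨hermiteSubgroup p.1.1 B.1 c, by
    rw [index_hermiteSubgroup (Nat.ne_zero_of_mem_divisorsAntidiagonal p.2).1, B.2,
      (Nat.mem_divisorsAntidiagonal.1 p.2).1]⟩

lemma hermiteSubgroupOfIndex_injective (m : ℕ) :
    Function.Injective (hermiteSubgroupOfIndex A m) := by
  rintro ⟨⟨⟨d, e⟩, hp⟩, ⟨B, rfl : B.index = e⟩, c⟩
    ⟨⟨⟨d', e'⟩, hp'⟩, ⟨B', rfl : B'.index = e'⟩, c'⟩ h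
  replace h : hermiteSubgroup d B c = hermiteSubgroup d' B' c' := congrArg Subtype.val h
  have hd : d ≠ 0 := (Nat.ne_zero_of_mem_divisorsAntidiagonal hp).1
  obtain rfl : d = d' := by
    have hmap := congrArg (fun L ↦ (L.map (AddMonoidHom.fst ℤ A)).index) h
    simpa only [map_fst_hermiteSubgroup, Int.index_zmultiples, Int.natAbs_natCast] using hmap
  obtain rfl : B = B' := by
    have hcomap := congrArg (fun L ↦ L.comap (AddMonoidHom.inr ℤ A)) h
    simpa only [comap_inr_hermiteSubgroup hd] using hcomap
  obtain rfl : c = c' := hermiteSubgroup_injective hd B h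
  rfl

lemma hermiteSubgroupOfIndex_surjective {m : ℕ} (hm : m ≠ 0) :
    Function.Surjective (hermiteSubgroupOfIndex A m) := by
  rintro ⟨L, hL⟩
  obtain ⟨c, hc⟩ := exists_hermiteSubgroup_eq L
  have hindex : _ ∧ m ≠ 0 := ⟨(index_eq_index_map_fst_mul_index_comap_inr L).symm.trans hL, hm⟩
  exact ⟨⟨⟨(_, _), Nat.mem_divisorsAntidiagonal.2 hindex⟩, ⟨_, rfl⟩, c⟩, Subtype.ext hc⟩

lemma nonempty_sigma_quotient_equiv {A : Type*} [AddGroup A] {e : ℕ} (he : e ≠ 0) :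
    Nonempty ((Σ B : {B : AddSubgroup A // B.index = e}, A ⧸ B.1) ≃
      {B : AddSubgroup A // B.index = e} × Fin e) := by
  refine ⟨(Equiv.sigmaCongrRight fun B ↦ ?_).trans (Equiv.sigmaEquivProd _ _)⟩
  have hcard : Nat.card (A ⧸ B.1) = e := B.2
  exact (Nat.equivFinOfCardPos (hcard.trans_ne he)).trans (finCongr hcard)

theorem nat_card_addSubgroup_int_prod [AddGroup.FG A] {m : ℕ} (hm : m ≠ 0) :
    Nat.card {L : AddSubgroup (ℤ × A) // L.index = m} =
      ∑ p ∈ m.divisorsAntidiagonal, p.2 * Nat.card {B : AddSubgroup A // B.index = p.2} := by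
  have hne (p : m.divisorsAntidiagonal) : p.1.2 ≠ 0 :=
    (Nat.ne_zero_of_mem_divisorsAntidiagonal p.2).2
  have cosetsEquiv (p : m.divisorsAntidiagonal) :=
    (nonempty_sigma_quotient_equiv (A := A) (hne p)).some
  have (p : m.divisorsAntidiagonal) :
      Finite (Σ B : {B : AddSubgroup A // B.index = p.1.2}, A ⧸ B.1) :=
    have := finite_addSubgroup_index_eq (A := A) (hne p)
    Finite.of_equiv _ (cosetsEquiv p).symm
  rw [← Nat.card_congr (Equiv.ofBijective (hermiteSubgroupOfIndex A m)
    ⟨hermiteSubgroupOfIndex_injective m, hermiteSubgroupOfIndex_surjective hm⟩), Nat.card_sigma,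
    ← Finset.sum_coe_sort m.divisorsAntidiagonal]
  refine Finset.sum_congr rfl fun p _ ↦ ?_
  rw [Nat.card_congr (cosetsEquiv p), Nat.card_prod, Nat.card_fin, mul_comm]

end SubgroupsOfIntProd

section SublatticesOfIntPow

lemma nat_card_addSubgroup_index_eq_of_subsingleton (A : Type*) [AddGroup A] [Subsingleton A]
    (m : ℕ) : Nat.card {B : AddSubgroup A // B.index = m} = if m = 1 then 1 else 0 := by
  have htop (B : AddSubgroup A) : B = ⊤ := Subsingleton.elim _ _
  split_ifs with hm
  · subst hm
    exact Nat.card_eq_one_iff_unique.2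
      ⟨⟨fun B B' ↦ Subtype.ext (Subsingleton.elim _ _)⟩, ⟨⊤, AddSubgroup.index_top⟩⟩
  · have : IsEmpty {B : AddSubgroup A // B.index = m} :=
      ⟨fun ⟨B, hB⟩ ↦ hm (by rw [← hB, htop B, AddSubgroup.index_top])⟩
    exact Nat.card_of_isEmpty

lemma nat_card_addSubgroup_index_eq (ℓ : ℕ) {m : ℕ} (hm : m ≠ 0) :
    Nat.card {L : AddSubgroup (Fin ℓ → ℤ) // L.index = m} = sublatticeCount ℓ m := by
  induction ℓ generalizing m with
  | zero =>
    rw [nat_card_addSubgroup_index_eq_of_subsingleton, sublatticeCount_zero,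
      ArithmeticFunction.one_apply]
  | succ ℓ ih =>
    rw [← nat_card_addSubgroup_index_congr (Fin.consLinearEquiv ℤ fun _ ↦ ℤ).toAddEquiv,
      nat_card_addSubgroup_int_prod hm, sublatticeCount_succ]
    refine Finset.sum_congr rfl fun p hp ↦ ?_
    rw [ih (Nat.ne_zero_of_mem_divisorsAntidiagonal hp).2]

theorem nat_card_subgroup_index_eq (ℓ : ℕ) {m : ℕ} (hm : m ≠ 0) :
    Nat.card {H : Subgroup (Fin ℓ → Multiplicative ℤ) // H.index = m} = sublatticeCount ℓ m := by
  rw [← nat_card_subgroup_index_congr (MulEquiv.piMultiplicative fun _ : Fin ℓ ↦ ℤ),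
    ← Nat.card_congr (addSubgroupIndexEquiv _ m), nat_card_addSubgroup_index_eq ℓ hm]

end SublatticesOfIntPow

section OrbitCount

variable {G X : Type*} [Group G]

/-- The number of orbits of the action of `G` on `X` given by `α`. -/
noncomputable def orbitCount (α : G →* Equiv.Perm X) : ℕ :=
  Nat.card (MulAction.orbitRel.Quotient α.range X)

/-- The set of orbits of the action of `G` on `X` given by `α`. -/
def orbitSets (α : G →* Equiv.Perm X) : Set (Set X) :=
  Set.range fun y ↦ Set.range fun g ↦ α g y

lemma orbitCount_eq_ncard (α : G →* Equiv.Perm X) : orbitCount α = (orbitSets α).ncard := by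
  have horbit (y : X) : MulAction.orbit α.range y = Set.range fun g ↦ α g y := by
    ext z
    simp [MulAction.mem_orbit_iff, Subgroup.smul_def]
  have hrange : orbitSets α = Set.range
      (MulAction.orbitRel.Quotient.orbit : MulAction.orbitRel.Quotient α.range X → Set X) := by
    rw [← Quotient.mk''_surjective.range_comp]
    exact congrArg Set.range (funext fun y ↦ (horbit y).symm)
  rw [hrange, Set.ncard_range_of_injective MulAction.orbitRel.Quotient.orbit_injective, orbitCount]

lemma orbitCount_le_card [Finite X] (α : G →* Equiv.Perm X) : orbitCount α ≤ Nat.card X :=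
  Nat.card_le_card_of_surjective _ Quotient.mk''_surjective

lemma orbitSets_permCongrHom_comp {Y : Type*} (e : X ≃ Y) (α : G →* Equiv.Perm X) :
    orbitSets (e.permCongrHom.toMonoidHom.comp α) = (e '' ·) '' orbitSets α := by
  rw [orbitSets, orbitSets, ← Set.range_comp, ← e.surjective.range_comp]
  refine congrArg Set.range (funext fun y ↦ ?_)
  simp [← Set.range_comp, Function.comp_def, Equiv.permCongrHom]

lemma orbitCount_permCongrHom_comp {Y : Type*} (e : X ≃ Y) (α : G →* Equiv.Perm X) :
    orbitCount (e.permCongrHom.toMonoidHom.comp α) = orbitCount α := by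
  rw [orbitCount_eq_ncard, orbitSets_permCongrHom_comp, orbitCount_eq_ncard,
    Set.ncard_image_of_injective _ (Set.image_injective.2 e.injective)]

end OrbitCount

section AdjoinOrbit

variable {G X : Type*} [Group G]

open Classical in
/-- The action on `X` which is `G ⧸ L` on the range of `φ` and `β` on its complement. -/
noncomputable def adjoinOrbit {L : Subgroup G} (φ : G ⧸ L ↪ X)
    (β : G →* Equiv.Perm {y // y ∉ Set.range φ}) : G →* Equiv.Perm X :=
  (Equiv.Perm.subtypeCongrHom (· ∈ Set.range φ)).comp <|
    ((Equiv.ofInjective φ φ.injective).permCongrHom.toMonoidHom.comp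
      (MulAction.toPermHom G (G ⧸ L))).prod β

variable {L : Subgroup G} (φ : G ⧸ L ↪ X) (β : G →* Equiv.Perm {y // y ∉ Set.range φ})

lemma adjoinOrbit_apply_embedding (g : G) (q : G ⧸ L) :
    adjoinOrbit φ β g (φ q) = φ (g • q) := by
  classical
  refine (Equiv.Perm.subtypeCongr.left_apply _ _ (Set.mem_range_self q)).trans (congrArg φ ?_)
  exact congrArg (g • ·) ((Equiv.ofInjective φ φ.injective).symm_apply_apply q)

lemma adjoinOrbit_apply_compl (g : G) (y : {y // y ∉ Set.range φ}) :
    adjoinOrbit φ β g y = β g y := by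
  classical
  exact Equiv.Perm.subtypeCongr.right_apply _ _ y.2

lemma orbitSets_adjoinOrbit : orbitSets (adjoinOrbit φ β) =
    insert (Set.range φ) ((Subtype.val '' ·) '' orbitSets β) := by
  have horbit_embedding (q : G ⧸ L) :
      Set.range (fun g ↦ adjoinOrbit φ β g (φ q)) = Set.range φ := by
    simp only [adjoinOrbit_apply_embedding]
    exact (MulAction.surjective_smul G q).range_comp φ
  have horbit_compl (y : {y // y ∉ Set.range φ}) :
      Set.range (fun g ↦ adjoinOrbit φ β g y) = Subtype.val '' Set.range (fun g ↦ β g y) := by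
    simp only [adjoinOrbit_apply_compl, ← Set.range_comp, Function.comp_def]
  ext s
  simp only [orbitSets, Set.mem_insert_iff, Set.mem_image, Set.mem_range, exists_exists_eq_and]
  constructor
  · rintro ⟨y, rfl⟩
    by_cases hy : y ∈ Set.range φ
    · obtain ⟨q, rfl⟩ := hy
      exact Or.inl (horbit_embedding q)
    · exact Or.inr ⟨⟨y, hy⟩, (horbit_compl ⟨y, hy⟩).symm⟩
  · rintro (rfl | ⟨y, rfl⟩)
    · exact ⟨φ (1 : G), horbit_embedding _⟩
    · exact ⟨y, horbit_compl y⟩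

lemma orbitCount_adjoinOrbit [Finite X] : orbitCount (adjoinOrbit φ β) = orbitCount β + 1 := by
  have hnotMem : Set.range φ ∉ (Subtype.val '' ·) '' orbitSets β := by
    rintro ⟨s, _, hs : Subtype.val '' s = Set.range φ⟩
    obtain ⟨y, -, hy⟩ := hs.ge ⟨((1 : G) : G ⧸ L), rfl⟩
    exact y.2 ⟨_, hy.symm⟩
  rw [orbitCount_eq_ncard, orbitSets_adjoinOrbit,
    Set.ncard_insert_of_notMem hnotMem (Set.toFinite _),
    Set.ncard_image_of_injective _ (Set.image_injective.2 Subtype.val_injective),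
    orbitCount_eq_ncard]

end AdjoinOrbit

section PointedActions

variable {G X : Type*} [Group G]

/-- The data of an orbit with a base point and of an action off that orbit: the stabilizer `L`, the
embedding of `G ⧸ L` as the orbit, and the action on the complement. -/
abbrev PointedOrbitData (G X : Type*) [Group G] : Type _ :=
  Σ L : Subgroup G, Σ φ : G ⧸ L ↪ X, G →* Equiv.Perm {y // y ∉ Set.range φ}

/-- The action on `X` assembled from `PointedOrbitData`, together with its base point. -/
noncomputable def pointedAction : PointedOrbitData G X → (G →* Equiv.Perm X) × X :=
  fun ⟨_, φ, β⟩ ↦ (adjoinOrbit φ β, φ (1 : G))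

lemma pointedAction_injective :
    Function.Injective (pointedAction : PointedOrbitData G X → (G →* Equiv.Perm X) × X) := by
  rintro ⟨L, φ, β⟩ ⟨L', φ', β'⟩ h
  have haction : adjoinOrbit φ β = adjoinOrbit φ' β' := congrArg Prod.fst h
  have hbase : φ (1 : G) = φ' (1 : G) := congrArg Prod.snd h
  have hcoset (g : G) : φ g = φ' g := by
    have hg := congrArg (fun α ↦ α g (φ (1 : G))) haction
    rw [adjoinOrbit_apply_embedding, hbase, adjoinOrbit_apply_embedding] at hg
    simpa only [MulAction.Quotient.smul_coe, smul_eq_mul, mul_one] using hg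
  obtain rfl : L = L' := by
    ext g
    have hmem (H : Subgroup G) : g ∈ H ↔ ((1 : G) : G ⧸ H) = g := by simp [QuotientGroup.eq]
    rw [hmem, hmem, ← φ.injective.eq_iff, ← φ'.injective.eq_iff, hcoset, hcoset]
  obtain rfl : φ = φ' := by
    ext q
    obtain ⟨g, rfl⟩ := QuotientGroup.mk_surjective q
    exact hcoset g
  obtain rfl : β = β' := by
    ext g y
    rw [← adjoinOrbit_apply_compl, haction, adjoinOrbit_apply_compl]
  rfl

lemma apply_mem_range_iff {L : Subgroup G} {φ : G ⧸ L ↪ X} {α : G →* Equiv.Perm X}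
    (hφ : ∀ g q, φ (g • q) = α g (φ q)) (g : G) (y : X) :
    α g y ∈ Set.range φ ↔ y ∈ Set.range φ := by
  have hmem (g : G) {y : X} : y ∈ Set.range φ → α g y ∈ Set.range φ := by
    rintro ⟨q, rfl⟩
    exact ⟨g • q, hφ g q⟩
  refine ⟨fun hy ↦ ?_, hmem g⟩
  simpa using hmem g⁻¹ hy

/-- The restriction of an action to the complement of an embedded orbit. -/
def restrictCompl {L : Subgroup G} {φ : G ⧸ L ↪ X} {α : G →* Equiv.Perm X}
    (hφ : ∀ g q, φ (g • q) = α g (φ q)) : G →* Equiv.Perm {y // y ∉ Set.range φ} where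
  toFun g := (α g).subtypePerm fun y ↦ not_congr (apply_mem_range_iff hφ g y)
  map_one' := by ext; simp
  map_mul' g k := by ext y; exact congrArg (· y.1) (map_mul α g k)

lemma adjoinOrbit_restrictCompl {L : Subgroup G} {φ : G ⧸ L ↪ X} {α : G →* Equiv.Perm X}
    (hφ : ∀ g q, φ (g • q) = α g (φ q)) : adjoinOrbit φ (restrictCompl hφ) = α := by
  ext g y
  by_cases hy : y ∈ Set.range φ
  · obtain ⟨q, rfl⟩ := hy
    rw [adjoinOrbit_apply_embedding, hφ]
  · exact adjoinOrbit_apply_compl φ _ g ⟨y, hy⟩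

lemma pointedAction_surjective :
    Function.Surjective (pointedAction : PointedOrbitData G X → (G →* Equiv.Perm X) × X) := by
  rintro ⟨α, p⟩
  let _ : MulAction G X := MulAction.compHom X α
  let φ : G ⧸ MulAction.stabilizer G p ↪ X :=
    ⟨MulAction.ofQuotientStabilizer G p, MulAction.injective_ofQuotientStabilizer G p⟩
  have hφ (g : G) (q : G ⧸ MulAction.stabilizer G p) : φ (g • q) = α g (φ q) :=
    MulAction.ofQuotientStabilizer_smul G p g q
  exact ⟨⟨_, φ, restrictCompl hφ⟩, Prod.ext (adjoinOrbit_restrictCompl hφ) (one_smul G p)⟩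

end PointedActions

section OrbitEnumerator

variable {G X : Type*} [Group G]

/-- The sum of `x ^ orbitCount α` over all actions `α` of `G` on `X`. -/
noncomputable def orbitEnumerator {R : Type*} [CommSemiring R] (G X : Type*) [Group G] (x : R) :
    R :=
  ∑ᶠ α : G →* Equiv.Perm X, x ^ orbitCount α

variable {R : Type*} [CommSemiring R] {Y : Type*}

lemma orbitEnumerator_congr (e : X ≃ Y) (x : R) :
    orbitEnumerator G X x = orbitEnumerator G Y x :=
  finsum_eq_of_bijective _ e.permCongrHom.monoidHomCongrRightEquiv.bijective fun α ↦
    congrArg (x ^ ·) (orbitCount_permCongrHom_comp e α).symm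

lemma nat_card_compl_range {L : Subgroup G} [Finite X] (φ : G ⧸ L ↪ X) :
    Nat.card {y // y ∉ Set.range φ} = Nat.card X - L.index := by
  have hrange : (Set.range φ).ncard = L.index := Set.ncard_range_of_injective φ.injective
  rw [← hrange, ← Set.ncard_compl]
  rfl

lemma nat_card_quotient_embedding (L : Subgroup G) [L.FiniteIndex] [Finite X] :
    Nat.card (G ⧸ L ↪ X) = (Nat.card X).descFactorial L.index := by
  have := Fintype.ofFinite (G ⧸ L)
  have := Fintype.ofFinite X
  rw [Nat.card_eq_fintype_card, Fintype.card_embedding_eq, ← Nat.card_eq_fintype_card,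
    ← Nat.card_eq_fintype_card, Subgroup.index]

lemma index_mem_Icc_of_embedding [Finite X] {L : Subgroup G} (φ : G ⧸ L ↪ X) :
    L.index ∈ Finset.Icc 1 (Nat.card X) :=
  have := Finite.of_injective φ φ.injective
  Finset.mem_Icc.2 ⟨Nat.card_pos, Nat.card_le_card_of_injective φ φ.injective⟩

variable [Group.FG G]

lemma card_mul_orbitEnumerator [Finite X] (x : R) : Nat.card X * orbitEnumerator G X x =
    ∑ᶠ D : PointedOrbitData G X, x ^ orbitCount (pointedAction D).1 := by
  have := Fintype.ofFinite X
  rw [finsum_eq_of_bijective (g := fun q : (G →* Equiv.Perm X) × X ↦ x ^ orbitCount q.1) _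
      ⟨pointedAction_injective, pointedAction_surjective⟩ fun _ ↦ rfl,
    finsum_curry _ (Set.toFinite _), orbitEnumerator, mul_finsum' _ _ (Set.toFinite _)]
  simp [finsum_eq_sum_of_fintype, nsmul_eq_mul]

lemma sum_orbitCount_adjoinOrbit [Finite X] {L : Subgroup G} (φ : G ⧸ L ↪ X) (x : R) :
    ∑ᶠ β : G →* Equiv.Perm {y // y ∉ Set.range φ}, x ^ orbitCount (adjoinOrbit φ β) =
      x * orbitEnumerator G (Fin (Nat.card X - L.index)) x := by
  rw [← nat_card_compl_range φ, ← orbitEnumerator_congr (Finite.equivFin {y // y ∉ Set.range φ}),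
    orbitEnumerator, mul_finsum' _ _ (Set.toFinite _)]
  simp only [orbitCount_adjoinOrbit, pow_succ']

lemma sum_orbitCount_pointedAction [Finite X] (L : Subgroup G) [L.FiniteIndex] (x : R) :
    ∑ᶠ D : Σ φ : G ⧸ L ↪ X, G →* Equiv.Perm {y // y ∉ Set.range φ},
        x ^ orbitCount (pointedAction ⟨L, D⟩).1 =
      x * ((Nat.card X).descFactorial L.index *
        orbitEnumerator G (Fin (Nat.card X - L.index)) x) := by
  have := Fintype.ofFinite (G ⧸ L ↪ X)
  have (φ : G ⧸ L ↪ X) := Fintype.ofFinite (G →* Equiv.Perm {y // y ∉ Set.range φ})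
  rw [finsum_eq_sum_of_fintype, Fintype.sum_sigma]
  simp only [pointedAction, ← finsum_eq_sum_of_fintype (α := G →* _), sum_orbitCount_adjoinOrbit]
  rw [Finset.sum_const, Finset.card_univ, ← Nat.card_eq_fintype_card,
    nat_card_quotient_embedding, nsmul_eq_mul, mul_left_comm]

lemma finite_setOf_index_mem_Icc (G : Type*) [Group G] [Group.FG G] (n : ℕ) :
    {L : Subgroup G | L.index ∈ Finset.Icc 1 n}.Finite :=
  (Finset.Icc 1 n).finite_toSet.preimage' fun _ hm ↦ Set.finite_coe_iff.1
    (finite_subgroup_index_eq (G := G) (Nat.one_le_iff_ne_zero.1 (Finset.mem_Icc.1 hm).1))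

/-- The subgroups of `G` of index between `1` and `n`. Infinite index, which is `0` for
`Subgroup.index`, is thereby excluded. -/
noncomputable def subgroupsOfIndexLE (G : Type*) [Group G] [Group.FG G] (n : ℕ) :
    Finset (Subgroup G) :=
  (finite_setOf_index_mem_Icc G n).toFinset

lemma mem_subgroupsOfIndexLE {n : ℕ} {L : Subgroup G} :
    L ∈ subgroupsOfIndexLE G n ↔ L.index ∈ Finset.Icc 1 n :=
  Set.Finite.mem_toFinset _

lemma sum_subgroupsOfIndexLE (n : ℕ) (f : ℕ → R) :
    ∑ L ∈ subgroupsOfIndexLE G n, f L.index =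
      ∑ m ∈ Finset.Icc 1 n, Nat.card {H : Subgroup G // H.index = m} * f m := by
  rw [← Finset.sum_fiberwise_of_maps_to fun L hL ↦ mem_subgroupsOfIndexLE.1 hL]
  refine Finset.sum_congr rfl fun m hm ↦ ?_
  rw [Finset.sum_congr rfl fun L hL ↦ by rw [(Finset.mem_filter.1 hL).2], Finset.sum_const,
    nsmul_eq_mul, Nat.subtype_card]
  intro L
  simp only [Finset.mem_filter, mem_subgroupsOfIndexLE, and_iff_right_iff_imp]
  rintro rfl
  exact hm

theorem card_mul_orbitEnumerator_eq_sum [Finite X] (x : R) :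
    Nat.card X * orbitEnumerator G X x =
      ∑ m ∈ Finset.Icc 1 (Nat.card X), Nat.card {H : Subgroup G // H.index = m} *
        (x * ((Nat.card X).descFactorial m * orbitEnumerator G (Fin (Nat.card X - m)) x)) := by
  have : Finite (PointedOrbitData G X) := Finite.of_injective _ pointedAction_injective
  have := Fintype.ofFinite (PointedOrbitData G X)
  have (L : Subgroup G) : Fintype (Σ φ : G ⧸ L ↪ X, G →* Equiv.Perm {y // y ∉ Set.range φ}) :=
    have := Finite.of_injective _ (sigma_mk_injective (β := fun L : Subgroup G ↦
      Σ φ : G ⧸ L ↪ X, G →* Equiv.Perm {y // y ∉ Set.range φ}) (i := L))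
    Fintype.ofFinite _
  have huniv : (Finset.univ : Finset (PointedOrbitData G X)) =
      (subgroupsOfIndexLE G (Nat.card X)).sigma fun _ ↦ Finset.univ := by
    ext ⟨L, φ, β⟩
    simp only [Finset.mem_univ, Finset.mem_sigma, mem_subgroupsOfIndexLE, and_true,
      index_mem_Icc_of_embedding φ]
  rw [card_mul_orbitEnumerator, finsum_eq_sum_of_fintype, huniv, Finset.sum_sigma,
    ← sum_subgroupsOfIndexLE]
  refine Finset.sum_congr rfl fun L hL ↦ ?_
  have : L.FiniteIndex :=
    ⟨Nat.one_le_iff_ne_zero.1 (Finset.mem_Icc.1 (mem_subgroupsOfIndexLE.1 hL)).1⟩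
  rw [← finsum_eq_sum_of_fintype, sum_orbitCount_pointedAction]

end OrbitEnumerator

section CommutingTuples

variable {ι M : Type*} [Group M]

lemma forall_mul_comm_iff_pairwise_commute_zpowersHom (σ : ι → M) :
    (∀ i j, σ i * σ j = σ j * σ i) ↔
      Pairwise fun i j ↦ ∀ a b, Commute (zpowersHom M (σ i) a) (zpowersHom M (σ j) b) := by
  refine ⟨fun h i j _ a b ↦ Commute.zpow_zpow (h i j) _ _, fun h i j ↦ ?_⟩
  rcases eq_or_ne i j with rfl | hij
  · rfl
  · simpa using (h hij (.ofAdd 1) (.ofAdd 1)).eq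

variable [Fintype ι] [DecidableEq ι]

/-- Commuting families of elements of `M`, seen as homomorphisms from the free abelian group. -/
def commutingFamilyEquiv :
    {σ : ι → M // ∀ i j, σ i * σ j = σ j * σ i} ≃ ((ι → Multiplicative ℤ) →* M) :=
  ((Equiv.piCongrRight fun _ ↦ zpowersHom M).subtypeEquiv
    forall_mul_comm_iff_pairwise_commute_zpowersHom).trans MonoidHom.noncommPiCoprodEquiv

lemma range_commutingFamilyEquiv (σ : {σ : ι → M // ∀ i j, σ i * σ j = σ j * σ i}) :
    (commutingFamilyEquiv σ).range = Subgroup.closure (Set.range σ.1) := by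
  have hrange (i : ι) : (zpowersHom M (σ.1 i)).range = Subgroup.closure {σ.1 i} := by
    rw [← Subgroup.zpowers_eq_closure]
    rfl
  calc (commutingFamilyEquiv σ).range
    _ = ⨆ i, (zpowersHom M (σ.1 i)).range :=
      MonoidHom.noncommPiCoprod_range _
        (hcomm := (forall_mul_comm_iff_pairwise_commute_zpowersHom σ.1).1 σ.2)
    _ = Subgroup.closure (Set.range σ.1) := by
      simp_rw [hrange, ← Subgroup.closure_iUnion, Set.iUnion_singleton_eq_range]

end CommutingTuples

section OrbitPolynomial

lemma orbitCount_commutingFamilyEquiv {ℓ n : ℕ}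
    (σ : {σ : Fin ℓ → Equiv.Perm (Fin n) // ∀ i j, σ i * σ j = σ j * σ i}) :
    orbitCount (commutingFamilyEquiv σ) = kappa σ.1 := by
  rw [orbitCount, range_commutingFamilyEquiv, kappa]

lemma nat_card_orbitCount_eq (ℓ n k : ℕ) :
    Nat.card {α : (Fin ℓ → Multiplicative ℤ) →* Equiv.Perm (Fin n) // orbitCount α = k} =
      Acount ℓ n k :=
  (Nat.card_congr <| (Equiv.subtypeSubtypeEquivSubtypeInter _ _).symm.trans <|
    commutingFamilyEquiv.subtypeEquiv fun σ ↦ by rw [orbitCount_commutingFamilyEquiv]).symm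

lemma sum_Acount_mul_pow (ℓ n : ℕ) (x : ℝ) :
    ∑ k ∈ Finset.range (n + 1), Acount ℓ n k * x ^ k =
      orbitEnumerator (Fin ℓ → Multiplicative ℤ) (Fin n) x := by
  classical
  have := Fintype.ofFinite ((Fin ℓ → Multiplicative ℤ) →* Equiv.Perm (Fin n))
  have hmaps (α : (Fin ℓ → Multiplicative ℤ) →* Equiv.Perm (Fin n)) (_ : α ∈ Finset.univ) :
      orbitCount α ∈ Finset.range (n + 1) := by
    simpa [Nat.lt_succ_iff] using orbitCount_le_card α
  rw [orbitEnumerator, finsum_eq_sum_of_fintype, ← Finset.sum_fiberwise_of_maps_to' hmaps]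
  refine Finset.sum_congr rfl fun k _ ↦ ?_
  rw [Finset.sum_const, nsmul_eq_mul, ← nat_card_orbitCount_eq, Nat.card_eq_fintype_card,
    Fintype.card_subtype]

lemma sum_Acount_mul_pow_pos (ℓ n : ℕ) {x : ℝ} (hx : 0 < x) :
    0 < ∑ k ∈ Finset.range (n + 1), Acount ℓ n k * x ^ k := by
  rw [sum_Acount_mul_pow, orbitEnumerator]
  exact finsum_pos (fun α ↦ by positivity) ⟨1, by positivity⟩ (Set.toFinite _)

lemma Hpoly_pos (ℓ n : ℕ) {x : ℝ} (hx : 0 < x) : 0 < Hpoly ℓ n x :=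
  mul_pos (by positivity) (sum_Acount_mul_pow_pos ℓ n hx)

lemma orbitEnumerator_eq_factorial_mul_Hpoly (ℓ n : ℕ) (x : ℝ) :
    orbitEnumerator (Fin ℓ → Multiplicative ℤ) (Fin n) x = n.factorial * Hpoly ℓ n x := by
  rw [Hpoly, sum_Acount_mul_pow]
  field_simp

lemma mul_Hpoly_eq_sum (ℓ n : ℕ) (x : ℝ) :
    n * Hpoly ℓ n x = ∑ m ∈ Finset.Icc 1 n, x * sublatticeCount ℓ m * Hpoly ℓ (n - m) x := by
  have hrec := card_mul_orbitEnumerator_eq_sum (G := Fin ℓ → Multiplicative ℤ) (X := Fin n) x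
  simp only [Nat.card_fin, orbitEnumerator_eq_factorial_mul_Hpoly] at hrec
  refine mul_left_cancel₀ (Nat.cast_ne_zero.2 n.factorial_ne_zero : (n.factorial : ℝ) ≠ 0) ?_
  rw [mul_left_comm, hrec, Finset.mul_sum]
  refine Finset.sum_congr rfl fun m hm ↦ ?_
  obtain ⟨hm₁, hmn⟩ := Finset.mem_Icc.1 hm
  rw [nat_card_subgroup_index_eq ℓ (by lia), ← Nat.factorial_mul_descFactorial hmn, Nat.cast_mul]
  ring

lemma tendsto_log_Hpoly_div_rpow {ℓ : ℕ} (hℓ : 2 ≤ ℓ) {x : ℝ} (hx : 0 < x) :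
    Tendsto (fun n : ℕ ↦ log (Hpoly ℓ n x) / (n : ℝ) ^ (1 - (ℓ : ℝ)⁻¹)) atTop
      (𝓝 ((x * Kconst ℓ) ^ (ℓ : ℝ)⁻¹ / (1 - (ℓ : ℝ)⁻¹))) :=
  ((hasLaplaceGrowth_sublatticeCount (by lia)).const_mul hx.le).tendsto_log_div_rpow
    (by exact_mod_cast hℓ) (mul_pos hx (Kconst_pos ℓ)) (fun n ↦ Hpoly_pos ℓ n hx)
    (fun n ↦ mul_Hpoly_eq_sum ℓ n x)

lemma log_Hpoly (ℓ n : ℕ) {x : ℝ} (hx : 0 < x) :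
    log (Hpoly ℓ n x) =
      log (∑ k ∈ Finset.range (n + 1), Acount ℓ n k * x ^ k) - log n.factorial := by
  rw [Hpoly, one_div, ← div_eq_inv_mul,
    log_div (sum_Acount_mul_pow_pos ℓ n hx).ne' (by positivity)]

lemma sub_log_mul_meanK_le (ℓ n : ℕ) {x : ℝ} (hx : 0 < x) (s : ℝ) :
    (s - log x) * meanK ℓ n x ≤ log (Hpoly ℓ n (exp s)) - log (Hpoly ℓ n x) := by
  have hexp (k : ℕ) : Acount ℓ n k * x ^ k * exp ((s - log x) * k) = Acount ℓ n k * exp s ^ k := by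
    rw [mul_comm _ (k : ℝ), exp_nat_mul, exp_sub, exp_log hx, div_pow, mul_assoc,
      mul_div_cancel₀ _ (by positivity)]
  have hjensen := sum_mul_div_sum_le_log_sub_log (s := Finset.range (n + 1))
    (w := fun k ↦ Acount ℓ n k * x ^ k) (v := fun k ↦ (s - log x) * k)
    (fun k _ ↦ by positivity) (sum_Acount_mul_pow_pos ℓ n hx)
  simp only [hexp] at hjensen
  rw [log_Hpoly ℓ n (exp_pos s), log_Hpoly ℓ n hx, sub_sub_sub_cancel_right, meanK, expectK,
    ← mul_div_assoc, Finset.mul_sum]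
  convert! hjensen using 3 with k
  ring

lemma hasDerivAt_exp_mul_rpow_div {x K ρ : ℝ} (hx : 0 < x) (hK : 0 < K) (hρ : 1 < ρ) :
    HasDerivAt (fun s ↦ (exp s * K) ^ ρ⁻¹ / (1 - ρ⁻¹)) ((x * K) ^ ρ⁻¹ / (ρ - 1)) (log x) := by
  have hlinear : HasDerivAt (fun s ↦ exp s * K) (x * K) (log x) := by
    simpa only [exp_log hx] using (hasDerivAt_exp (log x)).mul_const K
  have hρ' : ρ - 1 ≠ 0 := by linarith
  convert! (hlinear.rpow_const (p := ρ⁻¹) (.inl (by positivity))).div_const (1 - ρ⁻¹) using 1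
  rw [exp_log hx, rpow_sub_one (by positivity)]
  field_simp

end OrbitPolynomial

/-- `E[K_{ℓ,n}] ~ ((x K_ℓ)^{1/ℓ}/(ℓ-1)) n^{(ℓ-1)/ℓ}` as `n → ∞`. -/
theorem mean_asymptotic (ℓ : ℕ) (hℓ : 2 ≤ ℓ) (x : ℝ) (hx : 0 < x) :
    Tendsto (fun n : ℕ =>
        meanK ℓ n x /
          ((x * Kconst ℓ) ^ ((1 : ℝ) / (ℓ : ℝ)) / ((ℓ : ℝ) - 1) *
            (n : ℝ) ^ (((ℓ : ℝ) - 1) / (ℓ : ℝ))))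
      atTop (nhds 1) := by
  have hK := Kconst_pos ℓ
  have hℓ' : (1 : ℝ) < ℓ := by exact_mod_cast hℓ
  have htangent : ∀ᶠ n : ℕ in atTop, ∀ s, (s - log x) * (meanK ℓ n x / n ^ (1 - (ℓ : ℝ)⁻¹)) ≤
      log (Hpoly ℓ n (exp s)) / n ^ (1 - (ℓ : ℝ)⁻¹) -
        log (Hpoly ℓ n (exp (log x))) / n ^ (1 - (ℓ : ℝ)⁻¹) := by
    refine .of_forall fun n s ↦ ?_
    rw [← mul_div_assoc, ← sub_div, exp_log hx]
    exact div_le_div_of_nonneg_right (sub_log_mul_meanK_le ℓ n hx s) (by positivity)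
  have hmean := tendsto_of_subgradient (fun s ↦ tendsto_log_Hpoly_div_rpow hℓ (exp_pos s))
    (hasDerivAt_exp_mul_rpow_div hx hK hℓ') htangent
  have hconst : (x * Kconst ℓ) ^ (ℓ : ℝ)⁻¹ / (ℓ - 1) ≠ 0 :=
    (div_pos (by positivity) (sub_pos.2 hℓ')).ne'
  have hexponent : ((ℓ : ℝ) - 1) / ℓ = 1 - (ℓ : ℝ)⁻¹ := by field_simp
  have hratio := hmean.div_const ((x * Kconst ℓ) ^ (ℓ : ℝ)⁻¹ / (ℓ - 1))
  rw [div_self hconst] at hratio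
  exact hratio.congr fun n ↦ by rw [div_div, mul_comm (_ ^ _), hexponent, one_div]
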